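/- arXiv:2201.01043 — 5 statements merged into one kernel-verified Lean document; each statement's English description precedes it below -/
import Mathlib

section
/- Let G be a connected K_{1,4}-free simple graph of order n. If every independent set of 3 vertices in G has degree sum at least n, then G has a Hamiltonian path. -/
open SimpleGraph Finset List

open scoped Classical

variable {V : Type*}

/-- `G` contains no induced copy of `K_{1,4}` (a star with four edges). -/
def K14Free (G : SimpleGraph V) : Prop :=
  ¬ ∃ c a b d e : V, a ≠ b ∧ a ≠ d ∧ a ≠ e ∧ b ≠ d ∧ b ≠ e ∧ d ≠ e ∧
    G.Adj c a ∧ G.Adj c b ∧ G.Adj c d ∧ G.Adj c e ∧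
    ¬G.Adj a b ∧ ¬G.Adj a d ∧ ¬G.Adj a e ∧ ¬G.Adj b d ∧ ¬G.Adj b e ∧ ¬G.Adj d e

/-- `s` is an independent set of vertices of `G`. -/
def IsIndepFinset (G : SimpleGraph V) (s : Finset V) : Prop :=
  ∀ u ∈ s, ∀ v ∈ s, u ≠ v → ¬G.Adj u v

/-- The set `L(T)` of leaves (vertices of degree one) of `T`. -/
noncomputable def leafSet [Fintype V] (T : SimpleGraph V) : Finset V :=
  Finset.univ.filter fun v => T.degree v = 1

/-- The set `B(T)` of branch vertices (vertices of degree at least three) of `T`. -/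
noncomputable def branchSet [Fintype V] (T : SimpleGraph V) : Finset V :=
  Finset.univ.filter fun v => 3 ≤ T.degree v

/-- `v` is an oblique neighbor of the edge `e` with respect to the (spanning) tree `T` of `G`:
`e = s(a,b)` where `b` is the endpoint of `e` farthest from `v` in `T`, and `v b ∈ E(G)`. -/
def IsObliqueNbr (G T : SimpleGraph V) (e : Sym2 V) (v : V) : Prop :=
  ∃ a b : V, e = s(a, b) ∧ T.dist v a < T.dist v b ∧ G.Adj v b

/-- The number of vertices of the reducible stem `R_Stem(T)` of `T`: a vertex `v` survives
iff for every leaf `x` of `T` the (unique) path of `T` from `x` to `v` contains a branch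
vertex (so exactly the vertices not lying strictly before the first branch vertex on the
path leaving some leaf). -/
noncomputable def rstemCard [Fintype V] (T : SimpleGraph V) : ℕ :=
  {v : V | ∀ x : V, T.degree x = 1 → ∀ p : T.Walk x v, p.IsPath →
    ∃ w ∈ p.support, 3 ≤ T.degree w}.ncard

/-!
Among all spiders (subdivisions of the claw) in `G` take one with as many vertices as possible. If
`G` has no Hamiltonian path then an edge leaving a longest path gives a spider with more vertices
than any path; so the vertices of the maximum spider do not span a path, while all neighbors of its
three leaves `u`, `v`, `w` lie on it. Rerouting shows that `u`, `v`, `w` are independent and that,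
for consecutive vertices `p`, `x` on the leg ending in `u` (with `p` closer to the center), at most
one of `u ~ p`, `v ~ x`, `w ~ x` holds; that `v ~ x` and `w ~ x` exclude each other is where the
absence of `K_{1,4}` enters, since otherwise `x` would be the center of one with ends `v`, `w` and
its two neighbors on the leg. Summing over the edges of the three legs, the leaves have degree sum
less than the number of vertices of the spider.
-/

section Walk

variable {G : SimpleGraph V}

/-- `s` is the collection of vertices, counted with multiplicity, of some walk. When `s` has no
repeated elements this says that the subgraph induced by `s` has a Hamiltonian path; multisets make
the vertex count of a concatenation of walks additive. -/
def IsTraceable (G : SimpleGraph V) (s : Multiset V) : Prop :=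
  ∃ (x y : V) (p : G.Walk x y), (p.support : Multiset V) = s

theorem coe_support_reverse {x y : V} (p : G.Walk x y) :
    (p.reverse.support : Multiset V) = p.support := by
  rw [Walk.support_reverse, Multiset.coe_reverse]

theorem coe_support_cons {x y z : V} (h : G.Adj x y) (p : G.Walk y z) :
    ((Walk.cons h p).support : Multiset V) = {x} + ↑p.support := by
  rw [Walk.support_cons, ← Multiset.cons_coe, Multiset.singleton_add]

theorem coe_support_append_cons {x y z t : V} (p : G.Walk x y) (h : G.Adj y z)
    (q : G.Walk z t) : ((p.append (.cons h q)).support : Multiset V) = p.support + q.support := by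
  rw [Walk.support_append, Walk.support_cons, List.tail_cons, Multiset.coe_add]

theorem sum_map_support_le {f g : V → ℕ} {x y : V} (p : G.Walk x y)
    (hfg : ∀ {a b : V} (X : G.Walk x a) (h : G.Adj a b) (Y : G.Walk b y),
      p = X.append (.cons h Y) → f a + g b ≤ 1) :
    (p.support.map fun z => f z + g z).sum ≤ p.length + g x + f y := by
  induction p with
  | nil => simp [add_comm]
  | cons h p ih =>
    have first_edge := hfg .nil h p rfl
    have rest := ih fun X h' Y hp => hfg (.cons h X) h' Y (by rw [hp, Walk.cons_append])
    simp only [Walk.support_cons, List.map_cons, List.sum_cons, Walk.length_cons]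
    omega

theorem degree_eq_sum_adjMatrix [Fintype V] {s : Multiset V} {t : V} (hs : s.Nodup)
    (ht : ∀ z, G.Adj t z → z ∈ s) : G.degree t = (s.map (G.adjMatrix ℕ t)).sum := by
  have hN : (⟨s, hs⟩ : Finset V).filter (G.Adj t) = G.neighborFinset t := by
    ext z
    simpa using ht z
  rw [← card_neighborFinset_eq_degree, ← hN, Finset.card_filter]
  rfl

end Walk

/-- A leg of a spider with center `c`: a walk from a neighbor `root` of `c` to the end `leaf` of the
leg. The center is not part of the walk, so that the vertices of a spider are those of its legs and
the center, each once. -/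
structure SpiderLeg (G : SimpleGraph V) (c : V) where
  root : V
  leaf : V
  adj : G.Adj c root
  walk : G.Walk root leaf

namespace SpiderLeg

variable {G : SimpleGraph V} {c : V}

/-- The vertices of a leg, without the center. -/
def support (L : SpiderLeg G c) : Multiset V :=
  L.walk.support

theorem leaf_mem_support (L : SpiderLeg G c) : L.leaf ∈ L.support :=
  Multiset.mem_coe.2 L.walk.end_mem_support

/-- The leg prolonged beyond its leaf by a neighbor `z` of the leaf. -/
def extend (L : SpiderLeg G c) {z : V} (h : G.Adj L.leaf z) : SpiderLeg G c :=
  ⟨L.root, z, L.adj, L.walk.concat h⟩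

theorem support_extend (L : SpiderLeg G c) {z : V} (h : G.Adj L.leaf z) :
    (L.extend h).support = z ::ₘ L.support := by
  simp [support, extend, Walk.support_concat, ← Multiset.coe_add, add_comm]

end SpiderLeg

/-- A spider in `G`: three nonempty paths that issue from a common center and are otherwise
disjoint, i.e. a subdivision of the claw `K_{1,3}`. -/
structure Spider (G : SimpleGraph V) where
  center : V
  leg₁ : SpiderLeg G center
  leg₂ : SpiderLeg G center
  leg₃ : SpiderLeg G center
  nodup : (center ::ₘ (leg₁.support + leg₂.support + leg₃.support)).Nodup

namespace Spider

variable {G : SimpleGraph V}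

/-- The vertices of a spider. -/
def support (S : Spider G) : Multiset V :=
  S.center ::ₘ (S.leg₁.support + S.leg₂.support + S.leg₃.support)

/-- The same spider with its second and third legs exchanged. -/
def swap (S : Spider G) : Spider G where
  center := S.center
  leg₁ := S.leg₁
  leg₂ := S.leg₃
  leg₃ := S.leg₂
  nodup := by rw [add_right_comm]; exact S.nodup

/-- The same spider with its legs permuted cyclically, the second leg becoming the first. -/
def rotate (S : Spider G) : Spider G where
  center := S.center
  leg₁ := S.leg₂
  leg₂ := S.leg₃
  leg₃ := S.leg₁
  nodup := by rw [add_comm, ← add_assoc]; exact S.nodup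

theorem support_swap (S : Spider G) : S.swap.support = S.support :=
  congrArg (S.center ::ₘ ·) (add_right_comm ..)

theorem support_rotate (S : Spider G) : S.rotate.support = S.support := by
  simp only [support, rotate]
  abel_nf

theorem isPath_leg₁ (S : Spider G) : S.leg₁.walk.IsPath := by
  have h := (Multiset.nodup_cons.1 S.nodup).2
  rw [add_assoc] at h
  exact .mk' (Multiset.coe_nodup.1 (Multiset.nodup_add.1 h).1)

theorem ne_of_mem_leg₁_of_mem_leg₂ (S : Spider G) {x y : V} (hx : x ∈ S.leg₁.support)
    (hy : y ∈ S.leg₂.support) : x ≠ y := by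
  have h := (Multiset.nodup_add.1 (Multiset.nodup_cons.1 S.nodup).2).1
  exact Multiset.disjoint_iff_ne.1 (Multiset.nodup_add.1 h).2.2 x hx y hy

/-- The three leaves of a spider. -/
noncomputable def leaves (S : Spider G) : Finset V :=
  {S.leg₁.leaf, S.leg₂.leaf, S.leg₃.leaf}

theorem leaf₁_ne_leaf₂ (S : Spider G) : S.leg₁.leaf ≠ S.leg₂.leaf :=
  S.ne_of_mem_leg₁_of_mem_leg₂ S.leg₁.leaf_mem_support S.leg₂.leaf_mem_support

theorem sum_leaves {M : Type*} [AddCommMonoid M] (S : Spider G) (f : V → M) :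
    ∑ v ∈ S.leaves, f v = f S.leg₁.leaf + f S.leg₂.leaf + f S.leg₃.leaf := by
  have h₁ : S.leg₁.leaf ∉ ({S.leg₂.leaf, S.leg₃.leaf} : Finset V) := by
    simpa using ⟨S.leaf₁_ne_leaf₂, S.swap.leaf₁_ne_leaf₂⟩
  have h₂ : S.leg₂.leaf ≠ S.leg₃.leaf := S.rotate.leaf₁_ne_leaf₂
  rw [leaves, Finset.sum_insert h₁, Finset.sum_pair h₂, add_assoc]

theorem card_leaves (S : Spider G) : S.leaves.card = 3 :=
  Finset.card_eq_three.2 ⟨_, _, _, S.leaf₁_ne_leaf₂, S.swap.leaf₁_ne_leaf₂,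
    S.rotate.leaf₁_ne_leaf₂, rfl⟩

/-- The number of leaves of the spider adjacent to `z`, as a sum of entries of the adjacency matrix
so that it can be summed over `z` and compared with the degrees of the leaves. -/
noncomputable def leafAdjCount (S : Spider G) (z : V) : ℕ :=
  ∑ t ∈ S.leaves, G.adjMatrix ℕ t z

theorem leafAdjCount_eq (S : Spider G) (z : V) : S.leafAdjCount z =
    G.adjMatrix ℕ S.leg₁.leaf z + G.adjMatrix ℕ S.leg₂.leaf z + G.adjMatrix ℕ S.leg₃.leaf z :=
  S.sum_leaves fun t => G.adjMatrix ℕ t z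

theorem leaves_rotate (S : Spider G) : S.rotate.leaves = S.leaves := by
  simp only [leaves, rotate]
  grind

theorem leafAdjCount_rotate (S : Spider G) : S.rotate.leafAdjCount = S.leafAdjCount := by
  unfold leafAdjCount
  rw [leaves_rotate]

section Rerouting

variable {S : Spider G} (hS : ¬ IsTraceable G S.support)

include hS

theorem not_adj_leaf₁_leaf₂ : ¬ G.Adj S.leg₁.leaf S.leg₂.leaf := fun h =>
  hS ⟨_, _, S.leg₃.walk.reverse.append <| .cons S.leg₃.adj.symm <| .cons S.leg₁.adj <|
    S.leg₁.walk.append <| .cons h S.leg₂.walk.reverse, by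
    simp only [support, SpiderLeg.support, coe_support_append_cons, coe_support_cons,
      coe_support_reverse, ← Multiset.singleton_add]
    abel⟩

theorem not_adj_leaf₂_root₁ : ¬ G.Adj S.leg₂.leaf S.leg₁.root := fun h =>
  hS ⟨_, _, S.leg₁.walk.reverse.append <| .cons h.symm <| S.leg₂.walk.reverse.append <|
    .cons S.leg₂.adj.symm <| .cons S.leg₃.adj S.leg₃.walk, by
    simp only [support, SpiderLeg.support, coe_support_append_cons, coe_support_cons,
      coe_support_reverse, ← Multiset.singleton_add]
    abel⟩

theorem isIndepFinset_leaves : IsIndepFinset G S.leaves := by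
  have h₁₂ : ¬ G.Adj S.leg₁.leaf S.leg₂.leaf := not_adj_leaf₁_leaf₂ hS
  have h₁₃ : ¬ G.Adj S.leg₁.leaf S.leg₃.leaf :=
    not_adj_leaf₁_leaf₂ (S := S.swap) (by rwa [support_swap])
  have h₂₃ : ¬ G.Adj S.leg₂.leaf S.leg₃.leaf :=
    not_adj_leaf₁_leaf₂ (S := S.rotate) (by rwa [support_rotate])
  intro x hx y hy _
  simp only [leaves, Finset.mem_insert, Finset.mem_singleton] at hx hy
  rcases hx with rfl | rfl | rfl <;> rcases hy with rfl | rfl | rfl <;> simp_all [G.adj_comm]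

section AlongLeg

variable {p x : V} {X : G.Walk S.leg₁.root p} {hpx : G.Adj p x}

theorem not_adj_of_adj_leaf₂_of_adj_leaf₃ {y : V} {hxy : G.Adj x y} {Y : G.Walk y S.leg₁.leaf}
    (hleg : S.leg₁.walk = X.append (.cons hpx (.cons hxy Y)))
    (hx₂ : G.Adj S.leg₂.leaf x) (hx₃ : G.Adj S.leg₃.leaf x) : ¬ G.Adj p y := fun h =>
  hS ⟨_, _, Y.reverse.append <| .cons h.symm <| X.reverse.append <| .cons S.leg₁.adj.symm <|
    .cons S.leg₂.adj <| S.leg₂.walk.append <| .cons hx₂ <| .cons hx₃.symm S.leg₃.walk.reverse, by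
    simp only [support, SpiderLeg.support, hleg, coe_support_append_cons, coe_support_cons,
      coe_support_reverse, ← Multiset.singleton_add]
    abel⟩

variable {Y : G.Walk x S.leg₁.leaf} (hleg : S.leg₁.walk = X.append (.cons hpx Y))

include hleg

theorem not_adj_leaf₃_of_adj_leaf₂ (hx : G.Adj S.leg₂.leaf x) : ¬ G.Adj S.leg₃.leaf p := fun h =>
  hS ⟨_, _, Y.reverse.append <| .cons hx.symm <| S.leg₂.walk.reverse.append <|
    .cons S.leg₂.adj.symm <| .cons S.leg₁.adj <| X.append <| .cons h.symm S.leg₃.walk.reverse, by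
    simp only [support, SpiderLeg.support, hleg, coe_support_append_cons, coe_support_cons,
      coe_support_reverse, ← Multiset.singleton_add]
    abel⟩

theorem not_adj_leaf₁_of_adj_leaf₂ (hx : G.Adj S.leg₂.leaf x) : ¬ G.Adj S.leg₁.leaf p := fun h =>
  hS ⟨_, _, S.leg₂.walk.append <| .cons hx <| Y.append <| .cons h <| X.reverse.append <|
    .cons S.leg₁.adj.symm <| .cons S.leg₃.adj S.leg₃.walk, by
    simp only [support, SpiderLeg.support, hleg, coe_support_append_cons, coe_support_cons,
      coe_support_reverse, ← Multiset.singleton_add]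
    abel⟩

theorem not_adj_leaf₂_and_adj_leaf₃ (hK : K14Free G) :
    ¬ (G.Adj S.leg₂.leaf x ∧ G.Adj S.leg₃.leaf x) := by
  rintro ⟨hx₂, hx₃⟩
  cases Y with
  | nil => exact not_adj_leaf₁_leaf₂ hS hx₂.symm
  | @cons _ y _ hxy Y =>
    have hS' : ¬ IsTraceable G S.swap.support := by rwa [support_swap]
    have hleg' : S.leg₁.walk = (X.concat hpx).append (.cons hxy Y) := by
      rw [hleg, Walk.concat_append]
    have hvp : ¬ G.Adj S.leg₂.leaf p := not_adj_leaf₃_of_adj_leaf₂ hS' hleg hx₃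
    have hwp : ¬ G.Adj S.leg₃.leaf p := not_adj_leaf₃_of_adj_leaf₂ hS hleg hx₂
    have hvy : ¬ G.Adj S.leg₂.leaf y := fun h => not_adj_leaf₃_of_adj_leaf₂ hS hleg' h hx₃
    have hwy : ¬ G.Adj S.leg₃.leaf y := fun h => not_adj_leaf₃_of_adj_leaf₂ hS' hleg' h hx₂
    have hpy : ¬ G.Adj p y := not_adj_of_adj_leaf₂_of_adj_leaf₃ hS hleg hx₂ hx₃
    have hvw : ¬ G.Adj S.leg₂.leaf S.leg₃.leaf :=
      not_adj_leaf₁_leaf₂ (S := S.rotate) (by rwa [support_rotate])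
    have hp : p ∈ S.leg₁.support := by simp [SpiderLeg.support, hleg]
    have hy : y ∈ S.leg₁.support := by simp [SpiderLeg.support, hleg]
    have hpy_ne : p ≠ y := by
      have := (hleg ▸ S.isPath_leg₁).of_append_right
      rintro rfl
      simp [Walk.cons_isPath_iff] at this
    have ne_leaf₂ {z : V} (hz : z ∈ S.leg₁.support) : S.leg₂.leaf ≠ z :=
      (S.ne_of_mem_leg₁_of_mem_leg₂ hz S.leg₂.leaf_mem_support).symm
    have ne_leaf₃ {z : V} (hz : z ∈ S.leg₁.support) : S.leg₃.leaf ≠ z :=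
      (S.swap.ne_of_mem_leg₁_of_mem_leg₂ hz S.leg₃.leaf_mem_support).symm
    exact hK ⟨x, S.leg₂.leaf, S.leg₃.leaf, p, y, S.rotate.leaf₁_ne_leaf₂, ne_leaf₂ hp, ne_leaf₂ hy,
      ne_leaf₃ hp, ne_leaf₃ hy, hpy_ne, hx₂.symm, hx₃.symm, hpx.symm, hxy, hvw, hvp, hvy, hwp, hwy,
      hpy⟩

end AlongLeg

theorem sum_leg₁_leafAdjCount_le (hK : K14Free G) :
    G.adjMatrix ℕ S.leg₁.leaf S.center + (S.leg₁.support.map S.leafAdjCount).sum ≤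
      S.leg₁.support.card := by
  have hS' : ¬ IsTraceable G S.swap.support := by rwa [support_swap]
  have along_leg := sum_map_support_le (f := G.adjMatrix ℕ S.leg₁.leaf)
    (g := fun z => G.adjMatrix ℕ S.leg₂.leaf z + G.adjMatrix ℕ S.leg₃.leaf z) S.leg₁.walk
    fun {p x} X hpx Y hleg => by
      have h₁₂ := not_adj_leaf₁_of_adj_leaf₂ hS hleg
      have h₁₃ : G.Adj S.leg₃.leaf x → ¬ G.Adj S.leg₁.leaf p :=
        not_adj_leaf₁_of_adj_leaf₂ hS' hleg
      have h₂₃ := not_adj_leaf₂_and_adj_leaf₃ hS hleg hK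
      simp only [adjMatrix_apply]
      split_ifs <;> simp_all
  have hroot₂ : G.adjMatrix ℕ S.leg₂.leaf S.leg₁.root = 0 := if_neg (not_adj_leaf₂_root₁ hS)
  have hroot₃ : G.adjMatrix ℕ S.leg₃.leaf S.leg₁.root = 0 := if_neg (not_adj_leaf₂_root₁ hS')
  have hleaf : G.adjMatrix ℕ S.leg₁.leaf S.leg₁.leaf = 0 := if_neg G.irrefl
  have hcenter : G.adjMatrix ℕ S.leg₁.leaf S.center ≤ 1 := by
    rw [adjMatrix_apply]
    split_ifs <;> simp
  have hsum : (S.leg₁.support.map S.leafAdjCount).sum = (S.leg₁.walk.support.map fun z =>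
      G.adjMatrix ℕ S.leg₁.leaf z +
        (G.adjMatrix ℕ S.leg₂.leaf z + G.adjMatrix ℕ S.leg₃.leaf z)).sum := by
    simp only [← add_assoc, ← leafAdjCount_eq]
    rfl
  have hcard : S.leg₁.support.card = S.leg₁.walk.length + 1 := S.leg₁.walk.length_support
  omega

theorem sum_leafAdjCount_lt (hK : K14Free G) :
    (S.support.map S.leafAdjCount).sum < S.support.card := by
  have hcenter : S.leafAdjCount S.center = G.adjMatrix ℕ S.leg₁.leaf S.center +
      G.adjMatrix ℕ S.leg₂.leaf S.center + G.adjMatrix ℕ S.leg₃.leaf S.center :=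
    S.leafAdjCount_eq S.center
  have leg₁ := sum_leg₁_leafAdjCount_le hS hK
  have leg₂ : G.adjMatrix ℕ S.leg₂.leaf S.center + (S.leg₂.support.map S.leafAdjCount).sum ≤
      S.leg₂.support.card := by
    rw [← leafAdjCount_rotate]
    exact sum_leg₁_leafAdjCount_le (by rwa [support_rotate]) hK
  have leg₃ : G.adjMatrix ℕ S.leg₃.leaf S.center + (S.leg₃.support.map S.leafAdjCount).sum ≤
      S.leg₃.support.card := by
    rw [← leafAdjCount_rotate, ← leafAdjCount_rotate]
    exact sum_leg₁_leafAdjCount_le (by rwa [support_rotate, support_rotate]) hK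
  simp only [support, Multiset.map_cons, Multiset.map_add, Multiset.sum_cons, Multiset.sum_add,
    Multiset.card_cons, Multiset.card_add]
  omega

end Rerouting

section Maximum

/-- The spider whose first leg is prolonged by a vertex `z` outside the spider. -/
def extendLeg₁ (S : Spider G) {z : V} (h : G.Adj S.leg₁.leaf z) (hz : z ∉ S.support) :
    Spider G where
  center := S.center
  leg₁ := S.leg₁.extend h
  leg₂ := S.leg₂
  leg₃ := S.leg₃
  nodup := by
    rw [SpiderLeg.support_extend, Multiset.cons_add, Multiset.cons_add, Multiset.cons_swap]
    exact Multiset.nodup_cons.2 ⟨hz, S.nodup⟩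

theorem card_support_extendLeg₁ (S : Spider G) {z : V} (h : G.Adj S.leg₁.leaf z)
    (hz : z ∉ S.support) : (S.extendLeg₁ h hz).support.card = S.support.card + 1 := by
  simp [support, extendLeg₁, SpiderLeg.support_extend]

/-- `S` has as many vertices as any spider in `G`. -/
def IsMaximum (S : Spider G) : Prop :=
  ∀ T : Spider G, T.support.card ≤ S.support.card

theorem IsMaximum.rotate {S : Spider G} (hmax : S.IsMaximum) : S.rotate.IsMaximum := fun T => by
  simpa only [support_rotate] using hmax T

theorem IsMaximum.mem_support_of_adj_leaf₁ {S : Spider G} (hmax : S.IsMaximum) {z : V}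
    (h : G.Adj S.leg₁.leaf z) : z ∈ S.support := by
  by_contra hz
  have := hmax (S.extendLeg₁ h hz)
  rw [card_support_extendLeg₁] at this
  omega

theorem card_support_le [Fintype V] (S : Spider G) : S.support.card ≤ Fintype.card V :=
  Finset.card_le_univ ⟨S.support, S.nodup⟩

theorem exists_isMaximum [Finite V] [Nonempty (Spider G)] : ∃ S : Spider G, S.IsMaximum := by
  have := Fintype.ofFinite V
  have hbdd : BddAbove (Set.range fun S : Spider G => S.support.card) :=
    ⟨Fintype.card V, Set.forall_mem_range.2 card_support_le⟩
  obtain ⟨S, hS⟩ := Nat.sSup_mem (Set.range_nonempty _) hbdd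
  exact ⟨S, fun T => (le_csSup hbdd ⟨T, rfl⟩).trans_eq hS.symm⟩

theorem IsMaximum.mem_support_of_adj_leaf {S : Spider G} (hmax : S.IsMaximum) {t z : V}
    (ht : t ∈ S.leaves) (h : G.Adj t z) : z ∈ S.support := by
  simp only [leaves, Finset.mem_insert, Finset.mem_singleton] at ht
  rcases ht with rfl | rfl | rfl
  · exact hmax.mem_support_of_adj_leaf₁ h
  · rw [← support_rotate]
    exact hmax.rotate.mem_support_of_adj_leaf₁ h
  · rw [← support_rotate, ← support_rotate]
    exact hmax.rotate.rotate.mem_support_of_adj_leaf₁ h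

theorem IsMaximum.sum_degree_leaves [Fintype V] {S : Spider G} (hmax : S.IsMaximum) :
    ∑ t ∈ S.leaves, G.degree t = (S.support.map S.leafAdjCount).sum := by
  rw [Finset.sum_congr rfl fun t ht =>
    degree_eq_sum_adjMatrix S.nodup fun z => hmax.mem_support_of_adj_leaf ht]
  exact Multiset.sum_map_sum_map S.leaves.1 S.support

end Maximum

end Spider

section LongestPath

variable {G : SimpleGraph V} {x y z : V} {p : G.Walk x y} (hp : p.IsPath)

include hp

theorem exists_spider_of_adj_inner {c : V} (hc : c ∈ p.support) (hcx : c ≠ x) (hcy : c ≠ y)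
    (hcz : G.Adj c z) (hz : z ∉ p.support) :
    ∃ S : Spider G, S.support = z ::ₘ (p.support : Multiset V) := by
  obtain ⟨X, Y, rfl⟩ := Walk.mem_support_iff_exists_append.1 hc
  obtain ⟨X, rfl⟩ : ∃ X' : G.Walk c x, X = X'.reverse := ⟨X.reverse, X.reverse_reverse.symm⟩
  cases X with
  | nil => exact absurd rfl hcx
  | cons hX X =>
    cases Y with
    | nil => exact absurd rfl hcy
    | cons hY Y =>
      have hsupport : z ::ₘ (((Walk.cons hX X).reverse.append (.cons hY Y)).support : Multiset V) =
          c ::ₘ (X.support + Y.support + (Walk.nil : G.Walk z z).support) := by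
        rw [coe_support_append_cons, coe_support_reverse, coe_support_cons, Walk.support_nil,
          ← Multiset.singleton_add, ← Multiset.singleton_add, Multiset.coe_singleton]
        abel
      have hnodup := Multiset.nodup_cons.2 ⟨hz, Multiset.coe_nodup.2 hp.support_nodup⟩
      rw [hsupport] at hnodup
      exact ⟨⟨c, ⟨_, _, hX, X⟩, ⟨_, _, hY, Y⟩, ⟨_, _, hcz, .nil⟩, hnodup⟩, hsupport.symm⟩

variable (hmax : ∀ (u v : V) (q : G.Walk u v) (_ : q.IsPath), q.length ≤ p.length)

include hmax

theorem not_adj_start_of_longest_path (hz : z ∉ p.support) : ¬ G.Adj x z := fun h => by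
  have := hmax _ _ (.cons h.symm p) (hp.cons hz)
  rw [Walk.length_cons] at this
  omega

theorem exists_spider_of_longest_path (hG : G.Connected) (hz : z ∉ p.support) :
    ∃ S : Spider G, p.support.length < S.support.card := by
  obtain ⟨q⟩ := hG.preconnected x z
  obtain ⟨⟨⟨c, z⟩, hcz⟩, -, hc, hz⟩ :=
    q.exists_boundary_dart {v | v ∈ p.support} p.start_mem_support hz
  have hcx : c ≠ x := by
    rintro rfl
    exact not_adj_start_of_longest_path hp hmax hz hcz
  have hcy : c ≠ y := by
    rintro rfl
    exact not_adj_start_of_longest_path hp.reverse (by simpa only [Walk.length_reverse])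
      (by simpa only [Walk.support_reverse, List.mem_reverse]) hcz
  obtain ⟨S, hS⟩ := exists_spider_of_adj_inner hp hc hcx hcy hcz hz
  exact ⟨S, by simp [hS]⟩

end LongestPath

theorem exists_maximum_spider [Finite V] {G : SimpleGraph V} (hG : G.Connected)
    (hH : ¬ ∃ (u v : V) (p : G.Walk u v), p.IsHamiltonian) :
    ∃ S : Spider G, S.IsMaximum ∧ ¬ IsTraceable G S.support := by
  have := hG.nonempty
  obtain ⟨x, y, p, hp, hmax⟩ := Walk.exists_isPath_forall_isPath_length_le_length G
  obtain ⟨z, hz⟩ : ∃ z, z ∉ p.support := by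
    by_contra! hall
    exact hH ⟨x, y, p, hp.isHamiltonian_of_mem hall⟩
  obtain ⟨T, hT⟩ := exists_spider_of_longest_path hp hmax hG hz
  have : Nonempty (Spider G) := ⟨T⟩
  obtain ⟨S, hS⟩ := Spider.exists_isMaximum (G := G)
  refine ⟨S, hS, fun ⟨u, v, q, hq⟩ => ?_⟩
  have hq_path : q.IsPath := .mk' (Multiset.coe_nodup.1 (hq ▸ S.nodup))
  have hcard : q.support.length = S.support.card := congrArg Multiset.card hq
  have := hmax u v q hq_path
  have := hS T
  rw [Walk.length_support] at *
  omega

/-- If `G` is a connected `K_{1,4}`-free graph of order `n` with `σ_3(G) ≥ n`,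
then `G` has a Hamiltonian path. -/
theorem stmt4 {V : Type*} [Fintype V]
    (G : SimpleGraph V) (hG : G.Connected) (hK : K14Free G)
    (hσ : ∀ s : Finset V, IsIndepFinset G s → s.card = 3 →
      Fintype.card V ≤ ∑ v ∈ s, G.degree v) :
    ∃ (u v : V) (p : G.Walk u v), p.IsHamiltonian := by
  by_contra hH
  obtain ⟨S, hmax, hS⟩ := exists_maximum_spider hG hH
  have hlt := calc
    ∑ t ∈ S.leaves, G.degree t = (S.support.map S.leafAdjCount).sum := hmax.sum_degree_leaves
    _ < S.support.card := Spider.sum_leafAdjCount_lt hS hK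
    _ ≤ Fintype.card V := S.card_support_le
  exact hlt.not_ge (hσ S.leaves (Spider.isIndepFinset_leaves hS) S.card_leaves)
end

section
/- Let G be a connected K_{1,4}-free simple graph of order n. If every pair of non-adjacent vertices of G has degree sum at least (2/3)n, then G has a Hamiltonian path. -/
open SimpleGraph Finset List

open scoped Classical

variable {V : Type*}

/-!
Let `p` be a longest path, with vertices `x = p 0, …, p n = y`, and suppose that it misses a
vertex `w`. Then `x`, `y`, `w` are pairwise non-adjacent. Let `A`, `B`, `C` be the sets of
positions on `p` of the neighbours of `x`, `y`, `w`. Rerouting `p` shows that the shift of `B ∪ C`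
by one is disjoint from `A` and from `B ∩ C`. Being `K_{1,4}`-free at a common neighbour of `w`
with `x` or `y` forces an additional edge at `x` or `y`, and two positions in `A ∩ B ∩ C` would
provide enough such edges for a longer path, so `|A ∩ B ∩ C| ≤ 1`. Counting positions gives
`|A| + |B| + |C| ≤ n + 1`. All neighbours of `x` and `y` lie on `p`, so `d(x) + d(y) + d(w)` is
less than the order of `G`, whereas adding the degree conditions for the three pairs bounds it
below by the order.
-/

theorem support_take_append_support_drop_succ {G : SimpleGraph V} {x y : V} (p : G.Walk x y)
    {i : ℕ} (hi : i < p.length) :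
    (p.take i).support ++ (p.drop (i + 1)).support = p.support := by
  rw [Walk.support_take, Walk.drop_support_eq_support_drop_min, min_eq_left hi,
    List.take_append_drop]

theorem support_drop_eq_cons {G : SimpleGraph V} {x y : V} (p : G.Walk x y)
    {i : ℕ} (hi : i < p.length) :
    (p.drop i).support = p.getVert i :: (p.drop (i + 1)).support := by
  rw [Walk.drop_support_eq_support_drop_min, Walk.drop_support_eq_support_drop_min,
    min_eq_left hi.le, min_eq_left (Nat.succ_le_of_lt hi),
    List.drop_eq_getElem_cons (by rw [Walk.length_support]; omega), Walk.support_getElem_eq_getVert]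

theorem support_append_cons {G : SimpleGraph V} {a b c d : V} (p : G.Walk a b) (h : G.Adj b c)
    (q : G.Walk c d) : (p.append (.cons h q)).support = p.support ++ q.support := by
  simp [Walk.support_append]

/-- `p` is a path of maximal length among all paths of `G`. -/
def IsLongestPath {G : SimpleGraph V} {x y : V} (p : G.Walk x y) : Prop :=
  p.IsPath ∧ ∀ (a b : V) (q : G.Walk a b), q.IsPath → q.length ≤ p.length

theorem exists_isLongestPath [Finite V] [Nonempty V] (G : SimpleGraph V) :
    ∃ (x y : V) (p : G.Walk x y), IsLongestPath p := by
  obtain ⟨x, y, p, hp, hmax⟩ := Walk.exists_isPath_forall_isPath_length_le_length G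
  exact ⟨x, y, p, hp, hmax⟩

namespace IsLongestPath

variable {G : SimpleGraph V} {x y w : V} {p : G.Walk x y}

theorem reverse (hp : IsLongestPath p) : IsLongestPath p.reverse :=
  ⟨hp.1.reverse, fun a b q hq => by simpa only [Walk.length_reverse] using hp.2 a b q hq⟩

theorem of_support_perm {a b : V} {q : G.Walk a b} (hp : IsLongestPath p)
    (hq : q.support.Perm p.support) : IsLongestPath q := by
  have hlen : q.length = p.length := by simpa using hq.length_eq
  exact ⟨.mk' (hq.nodup_iff.2 hp.1.support_nodup), fun a b r hr => hlen ▸ hp.2 a b r hr⟩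

theorem not_support_perm_cons {a b : V} (hp : IsLongestPath p) (hw : w ∉ p.support)
    (q : G.Walk a b) : ¬q.support.Perm (w :: p.support) := fun hq => by
  have hq' : q.IsPath := .mk' (hq.nodup_iff.2 (List.nodup_cons.2 ⟨hw, hp.1.support_nodup⟩))
  have hlen : q.length = p.length + 1 := by simpa using hq.length_eq
  exact absurd (hp.2 a b q hq') (by omega)

theorem not_adj_start (hp : IsLongestPath p) (hw : w ∉ p.support) : ¬G.Adj w x := fun h =>
  hp.not_support_perm_cons hw (.cons h p) (.refl _)

theorem not_adj_end (hp : IsLongestPath p) (hw : w ∉ p.support) : ¬G.Adj w y :=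
  hp.reverse.not_adj_start (by simpa using hw)

theorem mem_support_of_adj_start (hp : IsLongestPath p) (h : G.Adj x w) : w ∈ p.support := by
  by_contra hw
  exact hp.not_adj_start hw h.symm

theorem mem_support_of_adj_end (hp : IsLongestPath p) (h : G.Adj y w) : w ∈ p.support := by
  by_contra hw
  exact hp.not_adj_end hw h.symm

variable {i : ℕ}

-- Otherwise: `p 0, …, p i, w, p (i + 1), …, p n`.
theorem not_adj_getVert_succ (hp : IsLongestPath p) (hw : w ∉ p.support) (hi : i < p.length)
    (h : G.Adj w (p.getVert i)) : ¬G.Adj w (p.getVert (i + 1)) := fun h' => by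
  refine hp.not_support_perm_cons hw
    ((p.take i).append (.cons h.symm (.cons h' (p.drop (i + 1))))) ?_
  rw [← support_take_append_support_drop_succ p hi]
  simp only [support_append_cons, Walk.support_cons]
  grind

-- Otherwise: `w, p i, …, p 0, p (i + 1), …, p n`.
theorem not_adj_getVert_of_start_adj_getVert_succ (hp : IsLongestPath p) (hw : w ∉ p.support)
    (hi : i < p.length) (h : G.Adj x (p.getVert (i + 1))) : ¬G.Adj w (p.getVert i) := fun h' => by
  refine hp.not_support_perm_cons hw
    (.cons h' ((p.take i).reverse.append (.cons h (p.drop (i + 1))))) ?_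
  rw [← support_take_append_support_drop_succ p hi]
  simp only [support_append_cons, Walk.support_cons, Walk.support_reverse]
  grind

-- Otherwise: `w, p (i + 1), …, p n, p i, …, p 0`.
theorem not_adj_getVert_succ_of_end_adj_getVert (hp : IsLongestPath p) (hw : w ∉ p.support)
    (hi : i < p.length) (h : G.Adj y (p.getVert i)) : ¬G.Adj w (p.getVert (i + 1)) := fun h' => by
  refine hp.not_support_perm_cons hw
    (.cons h' ((p.drop (i + 1)).append (.cons h (p.take i).reverse))) ?_
  rw [← support_take_append_support_drop_succ p hi]
  simp only [support_append_cons, Walk.support_cons, Walk.support_reverse]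
  grind

-- Otherwise: `w, p (i + 1), p 0, …, p i, p (i + 2), …, p n`.
theorem not_getVert_adj_getVert_add_two_of_start_adj (hp : IsLongestPath p) (hw : w ∉ p.support)
    (hi : i + 1 < p.length) (h : G.Adj w (p.getVert (i + 1))) (hx : G.Adj x (p.getVert (i + 1))) :
    ¬G.Adj (p.getVert i) (p.getVert (i + 2)) := fun h' => by
  refine hp.not_support_perm_cons hw
    (.cons h (.cons hx.symm ((p.take i).append (.cons h' (p.drop (i + 2)))))) ?_
  rw [← support_take_append_support_drop_succ p (by omega : i < p.length),
    support_drop_eq_cons p hi]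
  simp only [support_append_cons, Walk.support_cons]
  grind

-- Otherwise: `w, p (i + 1), p n, …, p (i + 2), p i, …, p 0`.
theorem not_getVert_adj_getVert_add_two_of_end_adj (hp : IsLongestPath p) (hw : w ∉ p.support)
    (hi : i + 1 < p.length) (h : G.Adj w (p.getVert (i + 1))) (hy : G.Adj y (p.getVert (i + 1))) :
    ¬G.Adj (p.getVert i) (p.getVert (i + 2)) := fun h' => by
  refine hp.not_support_perm_cons hw (.cons h (.cons hy.symm
    ((p.drop (i + 2)).reverse.append (.cons h'.symm (p.take i).reverse)))) ?_
  rw [← support_take_append_support_drop_succ p (by omega : i < p.length),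
    support_drop_eq_cons p hi]
  simp only [support_append_cons, Walk.support_cons, Walk.support_reverse]
  grind

-- Otherwise: `p i, …, p 0, p j, …, p (i + 2), p n, …, p (j + 1), w, p (i + 1)`.
theorem not_end_adj_getVert_add_two (hp : IsLongestPath p) (hw : w ∉ p.support) {j : ℕ}
    (hij : i + 2 ≤ j) (hj : j < p.length) (hwi : G.Adj w (p.getVert (i + 1)))
    (hwj : G.Adj w (p.getVert (j + 1))) (hx : G.Adj x (p.getVert j)) :
    ¬G.Adj y (p.getVert (i + 2)) := fun hy => by
  obtain ⟨k, rfl⟩ := Nat.exists_eq_add_of_le hij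
  rw [add_assoc (i + 2), ← p.drop_getVert] at hwj
  rw [← p.drop_getVert] at hx
  let r := p.drop (i + 2)
  refine hp.not_support_perm_cons hw ((p.take i).reverse.append (.cons hx ((r.take k).reverse.append
    (.cons hy.symm ((r.drop (k + 1)).reverse.append (.cons hwj.symm (.cons hwi .nil))))))) ?_
  rw [← support_take_append_support_drop_succ p (by omega : i < p.length),
    support_drop_eq_cons p (by omega),
    ← support_take_append_support_drop_succ r (by rw [Walk.drop_length]; omega : k < r.length)]
  simp only [support_append_cons, Walk.support_cons, Walk.support_nil, Walk.support_reverse]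
  grind

theorem exists_adj_getVert (hp : IsLongestPath p) (hG : G.Preconnected) (hw : w ∉ p.support) :
    ∃ u ∉ p.support, ∃ i < p.length, G.Adj u (p.getVert i) := by
  obtain ⟨q⟩ := hG x w
  obtain ⟨⟨⟨a, u⟩, hau⟩, -, ha, hu⟩ := q.exists_boundary_dart {z | z ∈ p.support} (by simp) hw
  obtain ⟨i, rfl, hi⟩ := Walk.mem_support_iff_exists_getVert.1 ha
  refine ⟨u, hu, i, lt_of_le_of_ne hi ?_, hau.symm⟩
  rintro rfl
  exact hp.not_adj_end hu (by simpa using hau.symm)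

theorem start_ne_end (hp : IsLongestPath p) (hG : G.Preconnected) (hw : w ∉ p.support) :
    x ≠ y := by
  rintro rfl
  obtain ⟨-, -, i, hi, -⟩ := hp.exists_adj_getVert hG hw
  exact hi.ne_bot (Walk.length_eq_zero_iff.2 (Walk.isPath_iff_nil.1 hp.1))

-- Otherwise the closing edge turns `p` into a cycle, which an edge to `u` off `p` extends to the
-- path `u, p i, …, p 0, p n, …, p (i + 1)`.
theorem not_start_adj_end (hp : IsLongestPath p) (hG : G.Preconnected) (hw : w ∉ p.support) :
    ¬G.Adj x y := fun h => by
  obtain ⟨u, hu, i, hi, hui⟩ := hp.exists_adj_getVert hG hw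
  refine hp.not_support_perm_cons hu
    (.cons hui ((p.take i).reverse.append (.cons h (p.drop (i + 1)).reverse))) ?_
  rw [← support_take_append_support_drop_succ p hi]
  simp only [support_append_cons, Walk.support_cons, Walk.support_reverse]
  grind

-- Otherwise `p 0, …, p i, p n, …, p (i + 1)` is a longest path with adjacent ends.
theorem not_end_adj_getVert_of_start_adj_getVert_succ (hp : IsLongestPath p) (hG : G.Preconnected)
    (hw : w ∉ p.support) (hi : i < p.length) (hx : G.Adj x (p.getVert (i + 1))) :
    ¬G.Adj y (p.getVert i) := fun hy => by
  let q := (p.take i).append (.cons hy.symm (p.drop (i + 1)).reverse)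
  have hq : q.support.Perm p.support := by
    rw [← support_take_append_support_drop_succ p hi]
    simp only [q, support_append_cons, Walk.support_reverse]
    grind
  exact (hp.of_support_perm hq).not_start_adj_end hG (fun h => hw (hq.mem_iff.1 h)) hx

theorem adj_or_adj_or_adj_of_adj_getVert_succ {z : V} (hp : IsLongestPath p) (hK : K14Free G)
    (hw : w ∉ p.support) (hi : i + 1 < p.length) (hwi : G.Adj w (p.getVert (i + 1)))
    (hzi : G.Adj z (p.getVert (i + 1))) (hwz : w ≠ z) (hwz' : ¬G.Adj w z)
    (hz : z ≠ p.getVert i) (hz' : z ≠ p.getVert (i + 2)) :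
    G.Adj (p.getVert i) (p.getVert (i + 2)) ∨ G.Adj z (p.getVert i) ∨
      G.Adj z (p.getVert (i + 2)) := by
  by_contra! h
  obtain ⟨hii, hzi₀, hzi₂⟩ := h
  have hw_ne (k : ℕ) : w ≠ p.getVert k := fun h => hw (h ▸ p.getVert_mem_support k)
  have hne : p.getVert i ≠ p.getVert (i + 2) := fun h => by
    have := hp.1.getVert_injOn (by grind : i ∈ _) (by grind : i + 2 ∈ _) h
    omega
  exact hK ⟨p.getVert (i + 1), w, z, p.getVert i, p.getVert (i + 2), hwz, hw_ne _, hw_ne _, hz, hz',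
    hne, hwi.symm, hzi.symm, (p.adj_getVert_succ (by omega)).symm, p.adj_getVert_succ hi, hwz',
    fun h => hp.not_adj_getVert_succ hw (by omega) h hwi,
    hp.not_adj_getVert_succ hw hi hwi, hzi₀, hzi₂, hii⟩

theorem start_adj_getVert_of_start_adj_getVert_succ (hp : IsLongestPath p) (hK : K14Free G)
    (hw : w ∉ p.support) (hi₀ : i ≠ 0) (hi : i + 1 < p.length)
    (hwi : G.Adj w (p.getVert (i + 1))) (hxi : G.Adj x (p.getVert (i + 1))) :
    G.Adj x (p.getVert i) := by
  have hx_ne {k : ℕ} (hk₀ : k ≠ 0) (hk : k ≤ p.length) : x ≠ p.getVert k :=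
    fun h => hk₀ ((hp.1.getVert_eq_start_iff hk).1 h.symm)
  have hwx : w ≠ x := fun h => hw (h ▸ p.start_mem_support)
  rcases hp.adj_or_adj_or_adj_of_adj_getVert_succ hK hw hi hwi hxi hwx (hp.not_adj_start hw)
    (hx_ne hi₀ (by omega)) (hx_ne (by omega) (by omega)) with h | h | h
  · exact absurd h (hp.not_getVert_adj_getVert_add_two_of_start_adj hw hi hwi hxi)
  · exact h
  · exact absurd hwi (hp.not_adj_getVert_of_start_adj_getVert_succ hw hi h)

theorem end_adj_getVert_add_two_of_end_adj_getVert_succ (hp : IsLongestPath p) (hK : K14Free G)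
    (hw : w ∉ p.support) (hi : i + 2 < p.length)
    (hwi : G.Adj w (p.getVert (i + 1))) (hyi : G.Adj y (p.getVert (i + 1))) :
    G.Adj y (p.getVert (i + 2)) := by
  have hy_ne {k : ℕ} (hk : k < p.length) : y ≠ p.getVert k :=
    fun h => hk.ne ((hp.1.getVert_eq_end_iff hk.le).1 h.symm)
  have hwy : w ≠ y := fun h => hw (h ▸ p.end_mem_support)
  rcases hp.adj_or_adj_or_adj_of_adj_getVert_succ hK hw (by omega) hwi hyi hwy (hp.not_adj_end hw)
    (hy_ne (by omega)) (hy_ne hi) with h | h | h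
  · exact absurd h (hp.not_getVert_adj_getVert_add_two_of_end_adj hw (by omega) hwi hyi)
  · exact absurd hwi (hp.not_adj_getVert_succ_of_end_adj_getVert hw (by omega) h)
  · exact h

theorem not_start_adj_getVert_of_lt {j : ℕ} (hp : IsLongestPath p) (hK : K14Free G)
    (hw : w ∉ p.support) (hij : i < j) (hj : j < p.length)
    (hwi : G.Adj w (p.getVert i)) (hyi : G.Adj y (p.getVert i)) (hwj : G.Adj w (p.getVert j)) :
    ¬G.Adj x (p.getVert j) := fun hxj => by
  obtain ⟨i, rfl⟩ : ∃ k, i = k + 1 :=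
    Nat.exists_eq_succ_of_ne_zero (by rintro rfl; exact hp.not_adj_start hw (by simpa using hwi))
  obtain ⟨j, rfl⟩ : ∃ k, j = k + 1 := ⟨j - 1, by omega⟩
  have hij' : i + 1 ≠ j := by
    rintro rfl
    exact hp.not_adj_getVert_succ hw (by omega) hwi hwj
  have hxj' := hp.start_adj_getVert_of_start_adj_getVert_succ hK hw (by omega) hj hwj hxj
  have hyi' := hp.end_adj_getVert_add_two_of_end_adj_getVert_succ hK hw (by omega) hwi hyi
  exact hp.not_end_adj_getVert_add_two hw (by omega) (by omega) hwi hwj hxj' hyi'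

end IsLongestPath

-- The shift of `B ∪ C` by one is disjoint from `A ∪ (B ∩ C)`, and both lie in `{1, …, n}`.
theorem card_add_card_add_card_le {A B C : Finset ℕ} {n : ℕ}
    (hA : A ⊆ Finset.Ioc 0 n) (hB : B ⊆ Finset.range n) (hC : C ⊆ Finset.Ioo 0 n)
    (hA' : ∀ i ∈ B ∪ C, i + 1 ∉ A) (hBC : ∀ i ∈ B ∪ C, i + 1 ∉ B ∩ C)
    (hABC : #(A ∩ (B ∩ C)) ≤ 1) : #A + #B + #C ≤ n + 1 := by
  let S := (B ∪ C).image (· + 1)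
  have hS : #S = #(B ∪ C) := Finset.card_image_of_injective _ (add_left_injective 1)
  have hdisj : Disjoint S (A ∪ B ∩ C) := by
    rw [Finset.disjoint_left, Finset.forall_mem_image]
    exact fun i hi hmem => (Finset.mem_union.1 hmem).elim (hA' i hi) (hBC i hi)
  have hsub : S ∪ (A ∪ B ∩ C) ⊆ Finset.Ioc 0 n := by grind
  have hcard := Finset.card_le_card hsub
  rw [Finset.card_union_of_disjoint hdisj, Nat.card_Ioc, hS] at hcard
  have hunion := Finset.card_union_add_card_inter A (B ∩ C)
  have hBC_card := Finset.card_union_add_card_inter B C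
  omega

/-- The positions along the walk `p` of the neighbours of `z`. -/
noncomputable def nbrPositions {G : SimpleGraph V} {x y : V} (p : G.Walk x y) (z : V) : Finset ℕ :=
  {k ∈ Finset.range (p.length + 1) | G.Adj z (p.getVert k)}

section NbrPositions

variable {G : SimpleGraph V} {x y z : V} {p : G.Walk x y}

theorem mem_nbrPositions {k : ℕ} :
    k ∈ nbrPositions p z ↔ k ≤ p.length ∧ G.Adj z (p.getVert k) := by
  simp [nbrPositions]

theorem adj_of_mem_nbrPositions {k : ℕ} (hk : k ∈ nbrPositions p z) : G.Adj z (p.getVert k) :=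
  (mem_nbrPositions.1 hk).2

theorem nbrPositions_start_subset_Ioc (p : G.Walk x y) :
    nbrPositions p x ⊆ Finset.Ioc 0 p.length := fun k hk => by
  obtain ⟨hkn, hxk⟩ := mem_nbrPositions.1 hk
  have hk₀ : k ≠ 0 := by
    rintro rfl
    simp at hxk
  exact Finset.mem_Ioc.2 ⟨hk₀.pos, hkn⟩

theorem nbrPositions_end_subset_range (p : G.Walk x y) :
    nbrPositions p y ⊆ Finset.range p.length := fun k hk => by
  obtain ⟨hkn, hyk⟩ := mem_nbrPositions.1 hk
  have hk_ne : k ≠ p.length := by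
    rintro rfl
    simp at hyk
  exact Finset.mem_range.2 (hkn.lt_of_ne hk_ne)

theorem card_neighborFinset_inter_support_le (p : G.Walk x y) (z : V) [Fintype (G.neighborSet z)] :
    #(G.neighborFinset z ∩ p.support.toFinset) ≤ #(nbrPositions p z) := by
  refine (Finset.card_le_card (t := (nbrPositions p z).image p.getVert) fun u hu => ?_).trans
    Finset.card_image_le
  obtain ⟨hzu, hu⟩ : G.Adj z u ∧ u ∈ p.support := by simpa using hu
  obtain ⟨k, rfl, hk⟩ := Walk.mem_support_iff_exists_getVert.1 hu
  exact Finset.mem_image_of_mem _ (mem_nbrPositions.2 ⟨hk, hzu⟩)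

theorem degree_le_card_nbrPositions [Fintype (G.neighborSet z)]
    (hz : ∀ u, G.Adj z u → u ∈ p.support) : G.degree z ≤ #(nbrPositions p z) := by
  refine (Finset.card_le_card fun u hu => ?_).trans (card_neighborFinset_inter_support_le p z)
  have hzu : G.Adj z u := by simpa using hu
  simpa using ⟨hzu, hz u hzu⟩

theorem degree_add_length_add_two_le [Fintype V] (hp : p.IsPath) (hz : z ∉ p.support) :
    G.degree z + (p.length + 2) ≤ #(nbrPositions p z) + Fintype.card V := by
  let S := insert z p.support.toFinset
  have hS : #S = p.length + 2 := by
    rw [Finset.card_insert_of_notMem (by simpa using hz),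
      List.toFinset_card_of_nodup hp.support_nodup, Walk.length_support]
  have hinter : G.neighborFinset z ∩ S = G.neighborFinset z ∩ p.support.toFinset :=
    Finset.inter_insert_of_notMem (by simp)
  have hcard := Finset.card_union_add_card_inter (G.neighborFinset z) S
  rw [hS, hinter, G.card_neighborFinset_eq_degree] at hcard
  have hpos := card_neighborFinset_inter_support_le p z
  have huniv := Finset.card_le_univ (G.neighborFinset z ∪ S)
  omega

end NbrPositions

namespace IsLongestPath

variable {G : SimpleGraph V} {x y w : V} {p : G.Walk x y}

theorem nbrPositions_subset_Ioo (hp : IsLongestPath p) (hw : w ∉ p.support) :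
    nbrPositions p w ⊆ Finset.Ioo 0 p.length := fun k hk => by
  obtain ⟨hkn, hwk⟩ := mem_nbrPositions.1 hk
  have hk₀ : k ≠ 0 := by
    rintro rfl
    exact hp.not_adj_start hw (by simpa using hwk)
  have hk_ne : k ≠ p.length := by
    rintro rfl
    exact hp.not_adj_end hw (by simpa using hwk)
  exact Finset.mem_Ioo.2 ⟨hk₀.pos, hkn.lt_of_ne hk_ne⟩

theorem card_nbrPositions_inter_le_one (hp : IsLongestPath p) (hK : K14Free G)
    (hw : w ∉ p.support) :
    #(nbrPositions p x ∩ (nbrPositions p y ∩ nbrPositions p w)) ≤ 1 := by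
  have hnot_lt : ∀ i ∈ nbrPositions p x ∩ (nbrPositions p y ∩ nbrPositions p w),
      ∀ j ∈ nbrPositions p x ∩ (nbrPositions p y ∩ nbrPositions p w), ¬i < j := by
    intro i hi j hj hij
    simp only [Finset.mem_inter] at hi hj
    have hjn : j < p.length := (Finset.mem_Ioo.1 (hp.nbrPositions_subset_Ioo hw hj.2.2)).2
    exact hp.not_start_adj_getVert_of_lt hK hw hij hjn (adj_of_mem_nbrPositions hi.2.2)
      (adj_of_mem_nbrPositions hi.2.1) (adj_of_mem_nbrPositions hj.2.2)
      (adj_of_mem_nbrPositions hj.1)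
  exact Finset.card_le_one.2 fun i hi j hj =>
    le_antisymm (not_lt.1 (hnot_lt j hj i hi)) (not_lt.1 (hnot_lt i hi j hj))

theorem card_nbrPositions_add_le (hp : IsLongestPath p) (hG : G.Preconnected) (hK : K14Free G)
    (hw : w ∉ p.support) :
    #(nbrPositions p x) + #(nbrPositions p y) + #(nbrPositions p w) ≤ p.length + 1 := by
  have hy_lt {k : ℕ} (hk : k ∈ nbrPositions p y) : k < p.length :=
    Finset.mem_range.1 (nbrPositions_end_subset_range p hk)
  have hw_lt {k : ℕ} (hk : k ∈ nbrPositions p w) : k < p.length :=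
    (Finset.mem_Ioo.1 (hp.nbrPositions_subset_Ioo hw hk)).2
  refine card_add_card_add_card_le (nbrPositions_start_subset_Ioc p)
    (nbrPositions_end_subset_range p) (hp.nbrPositions_subset_Ioo hw) (fun k hk hkx => ?_)
    (fun k hk hkyw => ?_) (hp.card_nbrPositions_inter_le_one hK hw)
  · have hxk := adj_of_mem_nbrPositions hkx
    rcases Finset.mem_union.1 hk with hky | hkw
    · exact hp.not_end_adj_getVert_of_start_adj_getVert_succ hG hw (hy_lt hky) hxk
        (adj_of_mem_nbrPositions hky)
    · exact hp.not_adj_getVert_of_start_adj_getVert_succ hw (hw_lt hkw) hxk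
        (adj_of_mem_nbrPositions hkw)
  · have hwk := adj_of_mem_nbrPositions (Finset.mem_inter.1 hkyw).2
    rcases Finset.mem_union.1 hk with hky | hkw
    · exact hp.not_adj_getVert_succ_of_end_adj_getVert hw (hy_lt hky)
        (adj_of_mem_nbrPositions hky) hwk
    · exact hp.not_adj_getVert_succ hw (hw_lt hkw) (adj_of_mem_nbrPositions hkw) hwk

theorem degree_add_degree_add_degree_lt_card [Fintype V] (hp : IsLongestPath p)
    (hG : G.Preconnected) (hK : K14Free G) (hw : w ∉ p.support) :
    G.degree x + G.degree y + G.degree w < Fintype.card V := by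
  have hpos : #(nbrPositions p x) + #(nbrPositions p y) + #(nbrPositions p w) ≤ p.length + 1 :=
    hp.card_nbrPositions_add_le hG hK hw
  have hx : G.degree x ≤ #(nbrPositions p x) :=
    degree_le_card_nbrPositions fun _ => hp.mem_support_of_adj_start
  have hy : G.degree y ≤ #(nbrPositions p y) :=
    degree_le_card_nbrPositions fun _ => hp.mem_support_of_adj_end
  have hw' := degree_add_length_add_two_le hp.1 hw
  omega

end IsLongestPath

theorem stmt5_general [Fintype V] (G : SimpleGraph V) (hG : G.Connected) (hK : K14Free G)
    (hσ : ∀ u v w : V, u ≠ v → u ≠ w → v ≠ w → ¬G.Adj u v → ¬G.Adj u w → ¬G.Adj v w →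
      Fintype.card V ≤ G.degree u + G.degree v + G.degree w) :
    ∃ (u v : V) (p : G.Walk u v), p.IsHamiltonian := by
  have := hG.nonempty
  obtain ⟨x, y, p, hp⟩ := exists_isLongestPath G
  refine ⟨x, y, p, hp.1.isHamiltonian_of_mem fun w => ?_⟩
  by_contra hw
  have hxw : x ≠ w := fun h => hw (h ▸ p.start_mem_support)
  have hyw : y ≠ w := fun h => hw (h ▸ p.end_mem_support)
  have hle := hσ x y w (hp.start_ne_end hG.preconnected hw) hxw hyw
    (hp.not_start_adj_end hG.preconnected hw) (fun h => hp.not_adj_start hw h.symm)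
    (fun h => hp.not_adj_end hw h.symm)
  exact hle.not_gt (hp.degree_add_degree_add_degree_lt_card hG.preconnected hK hw)

/-- If `G` is a connected `K_{1,4}`-free graph of order `n` in which every pair
of non-adjacent vertices has degree sum at least `(2/3) n`, then `G` has a Hamiltonian
path. -/
theorem stmt5 {V : Type*} [Fintype V]
    (G : SimpleGraph V) (hG : G.Connected) (hK : K14Free G)
    (hσ : ∀ u v : V, u ≠ v → ¬G.Adj u v →
      (2 : ℝ) / 3 * Fintype.card V ≤ (G.degree u + G.degree v : ℝ)) :
    ∃ (u v : V) (p : G.Walk u v), p.IsHamiltonian := by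
  refine stmt5_general G hG hK fun u v w huv huw hvw huv' huw' hvw' => ?_
  rify
  linarith [hσ u v huv huv', hσ u w huw huw', hσ v w hvw hvw']
end

section
/- Let G be a connected finite simple graph and let T be a spanning tree of G that has the minimum number of leaves among all spanning trees of G. If T has at least one branch vertex, then L(T) is an independent set of G. -/
open SimpleGraph Finset List

open scoped Classical

variable {V : Type*}

/-! Adding an edge `uv` of `G` between two leaves of `T` destroys both leaves and creates a cycle.
Some vertex `a` of this cycle has degree at least three, since otherwise no edge would leave the
cycle and, by connectedness, it would contain the branch vertex. Deleting an edge `ab` of the cycle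
restores a tree, and only `b` can become a leaf, so `T` did not have the fewest leaves. -/

section Connectivity

variable {G : SimpleGraph V}

lemma exists_adj_of_mem_of_notMem (hG : G.Preconnected) {s : Set V} {u v : V} (hu : u ∈ s)
    (hv : v ∉ s) : ∃ x ∈ s, ∃ y ∉ s, G.Adj x y := by
  obtain ⟨p⟩ := hG u v
  obtain ⟨d, -, hx, hy⟩ := p.exists_boundary_dart s hu hv
  exact ⟨d.fst, hx, d.snd, hy, d.adj⟩

lemma not_adj_of_degree_eq_one (hG : G.Preconnected) {u v w : V} [Fintype (G.neighborSet u)]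
    [Fintype (G.neighborSet v)] (hu : G.degree u = 1) (hv : G.degree v = 1) (hwu : w ≠ u)
    (hwv : w ≠ v) : ¬G.Adj u v := by
  intro huv
  have hw : w ∉ ({u, v} : Set V) := by simp [hwu, hwv]
  obtain ⟨x, hx, y, hy, hxy⟩ := exists_adj_of_mem_of_notMem hG (Set.mem_insert u {v}) hw
  rw [degree_eq_one_iff_existsUnique_adj] at hu hv
  rcases hx with rfl | rfl
  · exact hy (.inr (hu.unique hxy huv))
  · exact hy (.inl (hv.unique hxy huv.symm))

lemma exists_mem_support_three_le_degree [LocallyFinite G] (hG : G.Preconnected) {r w : V}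
    {c : G.Walk r r} (hc : c.IsCycle) (hw : 3 ≤ G.degree w) :
    ∃ a ∈ c.support, 3 ≤ G.degree a := by
  by_cases hwc : w ∈ c.support
  · exact ⟨w, hwc, hw⟩
  obtain ⟨a, ha, y, hy, hay⟩ :=
    exists_adj_of_mem_of_notMem hG (s := {x | x ∈ c.support}) c.start_mem_support hwc
  have hyc : y ∉ c.toSubgraph.neighborSet a := fun h ↦
    hy ((c.mem_verts_toSubgraph).1 (c.toSubgraph.edge_vert h.symm))
  have hsub : insert y (c.toSubgraph.neighborSet a) ⊆ G.neighborSet a :=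
    Set.insert_subset hay (c.toSubgraph.neighborSet_subset a)
  have hfin : (G.neighborSet a).Finite := Set.toFinite _
  refine ⟨a, ha, ?_⟩
  calc 3 = (c.toSubgraph.neighborSet a).ncard + 1 := by
        rw [hc.ncard_neighborSet_toSubgraph_eq_two ha]
    _ = (insert y (c.toSubgraph.neighborSet a)).ncard :=
        (Set.ncard_insert_of_notMem hyc (hfin.subset (c.toSubgraph.neighborSet_subset a))).symm
    _ ≤ (G.neighborSet a).ncard := Set.ncard_le_ncard hsub hfin
    _ = G.degree a := by rw [Set.ncard_eq_toFinset_card']; rfl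

lemma exists_adj_not_isBridge_three_le_degree [LocallyFinite G] (hG : G.Preconnected)
    (hcyc : ¬G.IsAcyclic) {w : V} (hw : 3 ≤ G.degree w) :
    ∃ a b, G.Adj a b ∧ ¬G.IsBridge s(a, b) ∧ 3 ≤ G.degree a := by
  obtain ⟨r, c, hc⟩ : ∃ r, ∃ c : G.Walk r r, c.IsCycle := by simpa [IsAcyclic] using hcyc
  obtain ⟨a, hac, ha⟩ := exists_mem_support_three_le_degree hG hc hw
  obtain ⟨b, hb⟩ : (c.toSubgraph.neighborSet a).Nonempty := by
    apply Set.nonempty_of_ncard_ne_zero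
    rw [hc.ncard_neighborSet_toSubgraph_eq_two hac]
    exact two_ne_zero
  have hab : s(a, b) ∈ c.edges := c.mem_edges_toSubgraph.1 hb
  exact ⟨a, b, c.adj_of_mem_edges hab, fun h ↦ h.notMem_edges_of_isCycle hc hab, ha⟩

end Connectivity

section EdgeExchange

variable {T : SimpleGraph V} {u v : V}

lemma not_isAcyclic_sup_edge (hT : T.IsTree) (huv : u ≠ v) (hadj : ¬T.Adj u v) :
    ¬(T ⊔ edge u v).IsAcyclic :=
  (isTree_iff_maximal_isAcyclic.1 hT).2.not_prop_of_gt (T.lt_sup_edge u v huv hadj)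

lemma isTree_deleteEdges_sup_edge [Finite V] (hT : T.IsTree) (huv : u ≠ v) (hadj : ¬T.Adj u v)
    {a b : V} (hab : (T ⊔ edge u v).Adj a b) (hbridge : ¬(T ⊔ edge u v).IsBridge s(a, b)) :
    ((T ⊔ edge u v).deleteEdges {s(a, b)}).IsTree := by
  have hconn := (hT.connected.mono le_sup_left).connected_delete_edge_of_not_isBridge hbridge
  have hedges : ((T ⊔ edge u v).deleteEdges {s(a, b)}).edgeSet.ncard = T.edgeSet.ncard := by
    have hsup : (T ⊔ edge u v).edgeSet = insert s(u, v) T.edgeSet := by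
      rw [edgeSet_sup, edgeSet_edge_of_ne huv, Set.union_singleton]
    rw [edgeSet_deleteEdges, Set.ncard_sdiff_singleton_of_mem ((mem_edgeSet _).2 hab), hsup,
      Set.ncard_insert_of_notMem (mt (mem_edgeSet T).1 hadj), Nat.add_sub_cancel]
  rw [isTree_iff_connected_and_card, Nat.card_coe_set_eq] at hT ⊢
  exact ⟨hconn, hedges ▸ hT.2⟩

end EdgeExchange

section Leaves

variable {G : SimpleGraph V} {a b u v x : V}

lemma degree_sup_edge_of_ne [Fintype (G.neighborSet x)] [Fintype ((G ⊔ edge u v).neighborSet x)]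
    (hxu : x ≠ u) (hxv : x ≠ v) : (G ⊔ edge u v).degree x = G.degree x := by
  have hnbr : (G ⊔ edge u v).neighborFinset x = G.neighborFinset x := by
    ext y
    simp [edge_adj, hxu, hxv]
  rw [← card_neighborFinset_eq_degree, hnbr, card_neighborFinset_eq_degree]

lemma degree_sup_edge_left [Fintype (G.neighborSet u)] [Fintype ((G ⊔ edge u v).neighborSet u)]
    (huv : u ≠ v) (hadj : ¬G.Adj u v) : (G ⊔ edge u v).degree u = G.degree u + 1 := by
  have hnbr : (G ⊔ edge u v).neighborFinset u = insert v (G.neighborFinset u) := by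
    ext y
    grind [mem_neighborFinset]
  rw [← card_neighborFinset_eq_degree, hnbr, Finset.card_insert_of_notMem (by simpa using hadj),
    card_neighborFinset_eq_degree]

lemma degree_deleteEdges_of_ne [Fintype (G.neighborSet x)]
    [Fintype ((G.deleteEdges {s(a, b)}).neighborSet x)] (hxa : x ≠ a) (hxb : x ≠ b) :
    (G.deleteEdges {s(a, b)}).degree x = G.degree x := by
  have hnbr : (G.deleteEdges {s(a, b)}).neighborFinset x = G.neighborFinset x := by
    ext y
    simp [hxa, hxb]
  rw [← card_neighborFinset_eq_degree, hnbr, card_neighborFinset_eq_degree]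

lemma degree_le_degree_deleteEdges_add_one (G : SimpleGraph V) (a b : V)
    [Fintype (G.neighborSet a)] [Fintype ((G.deleteEdges {s(a, b)}).neighborSet a)] :
    G.degree a ≤ (G.deleteEdges {s(a, b)}).degree a + 1 := by
  have hsub : G.neighborFinset a ⊆ insert b ((G.deleteEdges {s(a, b)}).neighborFinset a) := by
    intro y hy
    grind [mem_neighborFinset, deleteEdges_adj]
  exact (Finset.card_le_card hsub).trans (Finset.card_insert_le _ _)

variable [Fintype V]

lemma mem_leafSet [Fintype (G.neighborSet v)] : v ∈ leafSet G ↔ G.degree v = 1 := by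
  rw [leafSet, Finset.mem_filter_univ]
  convert Iff.rfl

lemma notMem_leafSet_sup_edge (huv : u ≠ v) (hadj : ¬G.Adj u v) (hu : G.degree u ≠ 0) :
    u ∉ leafSet (G ⊔ edge u v) := by
  rwa [mem_leafSet, degree_sup_edge_left huv hadj, Nat.add_eq_right]

lemma leafSet_sup_edge (huv : u ≠ v) (hadj : ¬G.Adj u v) (hu : G.degree u ≠ 0)
    (hv : G.degree v ≠ 0) : leafSet (G ⊔ edge u v) = leafSet G \ {u, v} := by
  have hu' : u ∉ leafSet (G ⊔ edge u v) := notMem_leafSet_sup_edge huv hadj hu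
  have hv' : v ∉ leafSet (G ⊔ edge u v) :=
    edge_comm v u ▸ notMem_leafSet_sup_edge huv.symm (mt Adj.symm hadj) hv
  ext x
  by_cases hxu : x = u
  · simp [hxu, hu']
  by_cases hxv : x = v
  · simp [hxv, hv']
  simp [mem_leafSet, degree_sup_edge_of_ne hxu hxv, hxu, hxv]

lemma leafSet_deleteEdges_subset [Fintype (G.neighborSet a)] (ha : 3 ≤ G.degree a) :
    leafSet (G.deleteEdges {s(a, b)}) ⊆ insert b (leafSet G) := by
  intro x hx
  rw [mem_leafSet] at hx
  rw [Finset.mem_insert, mem_leafSet]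
  by_contra! ⟨hxb, hxG⟩
  have hxa : x ≠ a := by
    rintro rfl
    have hdeg := degree_le_degree_deleteEdges_add_one G x b
    lia
  rw [degree_deleteEdges_of_ne hxa hxb] at hx
  exact hxG hx

lemma card_leafSet_deleteEdges_sup_edge_lt (huv : u ≠ v) (hadj : ¬G.Adj u v)
    (hu : u ∈ leafSet G) (hv : v ∈ leafSet G) (ha : 3 ≤ (G ⊔ edge u v).degree a) :
    #(leafSet ((G ⊔ edge u v).deleteEdges {s(a, b)})) < #(leafSet G) := by
  have hpair : {u, v} ⊆ leafSet G := Finset.insert_subset hu (Finset.singleton_subset_iff.2 hv)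
  have htwo : 2 ≤ #(leafSet G) := (Finset.card_pair huv).symm.trans_le (Finset.card_le_card hpair)
  rw [mem_leafSet] at hu hv
  calc #(leafSet ((G ⊔ edge u v).deleteEdges {s(a, b)}))
      ≤ #(leafSet (G ⊔ edge u v)) + 1 :=
        (Finset.card_le_card (leafSet_deleteEdges_subset ha)).trans (Finset.card_insert_le _ _)
    _ = #(leafSet G) - 2 + 1 := by
        rw [leafSet_sup_edge huv hadj (by simp [hu]) (by simp [hv]),
          Finset.card_sdiff_of_subset hpair, Finset.card_pair huv]
    _ < #(leafSet G) := by lia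

end Leaves

/-- If `T` is a spanning tree of a connected graph `G` with the minimum number
of leaves among all spanning trees, and `T` has a branch vertex, then `L(T)` is an
independent set of `G`. -/
theorem stmt9 {V : Type*} [Fintype V] (G T : SimpleGraph V) (hG : G.Connected)
    (hT : T ≤ G) (hTree : T.IsTree)
    (hC1 : ∀ T' : SimpleGraph V, T' ≤ G → T'.IsTree →
      (leafSet T).card ≤ (leafSet T').card)
    (hB : (branchSet T).Nonempty) :
    IsIndepFinset G (leafSet T) := by
  intro u hu v hv huv hadj
  have hsub : T ⊔ edge u v ≤ G := sup_le hT ((edge_le_iff G).2 (.inr hadj))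
  have hconn : (T ⊔ edge u v).Connected := hTree.connected.mono le_sup_left
  obtain ⟨w, hw⟩ : ∃ w, 3 ≤ T.degree w := by simpa [branchSet, Finset.Nonempty] using hB
  have hTadj : ¬T.Adj u v := by
    rw [mem_leafSet] at hu hv
    exact not_adj_of_degree_eq_one hTree.preconnected hu hv (w := w)
      (by rintro rfl; lia) (by rintro rfl; lia)
  obtain ⟨a, b, hab, hbridge, ha⟩ := exists_adj_not_isBridge_three_le_degree hconn.preconnected
    (not_isAcyclic_sup_edge hTree huv hTadj) (hw.trans (degree_le_of_le le_sup_left))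
  have hmin := hC1 _ ((deleteEdges_le _).trans hsub)
    (isTree_deleteEdges_sup_edge hTree huv hTadj hab hbridge)
  exact hmin.not_gt (card_leafSet_deleteEdges_sup_edge_lt huv hTadj hu hv ha)
end

section
/- Let G be a connected finite simple graph and let T be a spanning tree of G chosen so that (C1) |L(T)| is minimum among all spanning trees of G and (C2) |V(R_Stem(T))| is maximum subject to (C1), and suppose B(T) ≠ ∅. Let b, r be branch vertices of T such that the path P_T[b,r] contains no branch vertex other than b and r, let s be a leaf of T, and let x be a vertex of P_T[b,r] with x ≠ b; denote by x⁻ the predecessor of x on P_T[b,r] oriented from b to r. If sx is an edge of G, then sx⁻ is not an edge of G. -/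
open SimpleGraph Finset List

open scoped Classical

variable {V : Type*}

/-!
Suppose a leaf `s` of `T` were adjacent in `G` to both ends of an edge `xy` of `T` lying in the
reducible stem. Cut `s` off from its neighbor `t` in `T` and subdivide `xy` with it. The result is
again a spanning tree of `G`, and only two degrees change: that of `s` becomes `2`, and that of `t`
drops by one. Hence there are fewer leaves than in `T`, contradicting (C1), unless `t` has degree
two and takes the place of `s` among the leaves. In that case the reducible stem gains the vertex
`s` and loses nothing, contradicting (C2).
-/

section SubdivideEdge

variable {G H : SimpleGraph V} {s x y u v : V}

/-- The graph obtained from `G` by subdividing the edge `xy` with the vertex `s`. The vertex set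
stays `V`, so `s` is meant to be isolated in `G`. -/
def subdivideEdge (G : SimpleGraph V) (s x y : V) : SimpleGraph V :=
  (G ⊔ edge s x).deleteEdges {s(x, y)} ⊔ edge s y

lemma subdivideEdge_adj (hsx : s ≠ x) (hsy : s ≠ y) :
    (subdivideEdge G s x y).Adj u v ↔
      G.Adj u v ∧ s(u, v) ≠ s(x, y) ∨ s(u, v) = s(s, x) ∨ s(u, v) = s(s, y) := by
  simp only [subdivideEdge, sup_adj, deleteEdges_adj, edge_adj, Set.mem_singleton_iff, Sym2.eq_iff]
  grind

lemma subdivideEdge_le (hGH : G ≤ H) (hsx : H.Adj s x) (hsy : H.Adj s y) :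
    subdivideEdge G s x y ≤ H :=
  sup_le ((deleteEdges_le _).trans (sup_le hGH ((edge_le_iff _).2 (.inr hsx))))
    ((edge_le_iff _).2 (.inr hsy))

lemma reachable_subdivideEdge (hsx : s ≠ x) (hsy : s ≠ y) (h : G.Reachable u v) :
    (subdivideEdge G s x y).Reachable u v := by
  have hx : (subdivideEdge G s x y).Adj s x := (subdivideEdge_adj hsx hsy).2 (by simp)
  have hy : (subdivideEdge G s x y).Adj s y := (subdivideEdge_adj hsx hsy).2 (by simp)
  have hxy : (subdivideEdge G s x y).Reachable x y := hx.symm.reachable.trans hy.reachable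
  obtain ⟨p⟩ := h
  induction p with
  | nil => rfl
  | @cons u w v huw _ ih =>
    refine Reachable.trans ?_ ih
    by_cases heq : s(u, w) = s(x, y)
    · obtain ⟨rfl, rfl⟩ | ⟨rfl, rfl⟩ := Sym2.eq_iff.1 heq
      exacts [hxy, hxy.symm]
    · exact ((subdivideEdge_adj hsx hsy).2 (.inl ⟨huw, heq⟩)).reachable

lemma ne_of_isIsolated_of_adj (hs : G.IsIsolated s) (huv : G.Adj u v) : s ≠ u := by
  rintro rfl
  exact hs v huv

lemma isAcyclic_subdivideEdge (hG : G.IsAcyclic) (hs : G.IsIsolated s) (hxy : G.Adj x y) :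
    (subdivideEdge G s x y).IsAcyclic := by
  have hsx : s ≠ x := ne_of_isIsolated_of_adj hs hxy
  have hsy : s ≠ y := ne_of_isIsolated_of_adj hs hxy.symm
  have hacyclic : (G ⊔ edge s x).IsAcyclic :=
    hG.sup_edge_of_not_reachable
      (not_reachable_of_neighborSet_left_eq_empty hsx hs.neighborSet_eq_empty)
  have hbridge : ¬ ((G ⊔ edge s x).deleteEdges {s(x, y)}).Reachable x y :=
    isAcyclic_iff_forall_adj_isBridge.1 hacyclic (.inl hxy)
  have hadj : ((G ⊔ edge s x).deleteEdges {s(x, y)}).Adj x s := by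
    simp only [sup_adj, deleteEdges_adj, edge_adj, Set.mem_singleton_iff, Sym2.eq_iff]
    grind
  exact (hacyclic.anti (deleteEdges_le _)).sup_edge_of_not_reachable
    fun hreach ↦ hbridge (hadj.reachable.trans hreach)

section Degree

variable [(subdivideEdge G s x y).LocallyFinite]

lemma degree_subdivideEdge_self (hs : G.IsIsolated s) (hxy : G.Adj x y) :
    (subdivideEdge G s x y).degree s = 2 := by
  have hsx : s ≠ x := ne_of_isIsolated_of_adj hs hxy
  have hsy : s ≠ y := ne_of_isIsolated_of_adj hs hxy.symm
  have hnbr : (subdivideEdge G s x y).neighborFinset s = {x, y} := by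
    ext v
    have := hs v
    simp only [mem_neighborFinset, subdivideEdge_adj hsx hsy, Finset.mem_insert,
      Finset.mem_singleton, Sym2.eq_iff]
    grind
  rw [← card_neighborFinset_eq_degree, hnbr, Finset.card_pair hxy.ne]

variable [G.LocallyFinite]

lemma degree_subdivideEdge_of_ne (hs : G.IsIsolated s) (hxy : G.Adj x y) (hv : v ≠ s) :
    (subdivideEdge G s x y).degree v = G.degree v := by
  have hsx : s ≠ x := ne_of_isIsolated_of_adj hs hxy
  have hsy : s ≠ y := ne_of_isIsolated_of_adj hs hxy.symm
  have hsv : ¬ G.Adj v s := fun h ↦ hs v h.symm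
  rw [← card_neighborFinset_eq_degree, ← card_neighborFinset_eq_degree]
  by_cases hmem : v ∈ s(x, y)
  · obtain ⟨w, hw⟩ := Sym2.mem_iff_exists.1 hmem
    have hvw : G.Adj v w := by rwa [← mem_edgeSet, ← hw]
    have hnbr : (subdivideEdge G s x y).neighborFinset v =
        insert s ((G.neighborFinset v).erase w) := by
      ext u
      simp only [mem_neighborFinset, subdivideEdge_adj hsx hsy, Finset.mem_insert,
        Finset.mem_erase, Sym2.eq_iff] at hw ⊢
      grind
    rw [hnbr, Finset.card_insert_of_notMem (by simp [hsv]),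
      Finset.card_erase_add_one (by simpa using hvw)]
  · congr 1
    ext u
    simp only [mem_neighborFinset, subdivideEdge_adj hsx hsy, Sym2.mem_iff, Sym2.eq_iff] at hmem ⊢
    grind

end Degree

end SubdivideEdge

section DeleteIncidenceSet

variable {G : SimpleGraph V} {s u v : V}

lemma isIsolated_deleteIncidenceSet (G : SimpleGraph V) (s : V) :
    (G.deleteIncidenceSet s).IsIsolated s :=
  fun _ h ↦ (deleteIncidenceSet_adj.1 h).2.1 rfl

lemma reachable_deleteIncidenceSet [Fintype (G.neighborSet s)] (hG : G.Connected)
    (hs : G.degree s = 1) (hu : u ≠ s) (hv : v ≠ s) : (G.deleteIncidenceSet s).Reachable u v := by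
  have hinduce := (hG.induce_compl_singleton_of_degree_eq_one hs).preconnected ⟨u, hu⟩ ⟨v, hv⟩
  rw [← G.induce_deleteIncidenceSet_of_notMem (by simp : s ∉ ({s}ᶜ : Set V))] at hinduce
  exact hinduce.map (Embedding.induce _).toHom

variable [G.LocallyFinite] [(G.deleteIncidenceSet s).LocallyFinite]

lemma neighborFinset_deleteIncidenceSet (hv : v ≠ s) :
    (G.deleteIncidenceSet s).neighborFinset v = (G.neighborFinset v).erase s := by
  ext w
  simp only [mem_neighborFinset, deleteIncidenceSet_adj, Finset.mem_erase]
  tauto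

lemma degree_deleteIncidenceSet_add_one (hsv : G.Adj s v) :
    (G.deleteIncidenceSet s).degree v + 1 = G.degree v := by
  rw [← card_neighborFinset_eq_degree, neighborFinset_deleteIncidenceSet hsv.ne',
    Finset.card_erase_add_one ((G.mem_neighborFinset v s).2 hsv.symm),
    card_neighborFinset_eq_degree]

lemma degree_deleteIncidenceSet_of_not_adj (hv : v ≠ s) (hsv : ¬ G.Adj s v) :
    (G.deleteIncidenceSet s).degree v = G.degree v := by
  have hs : s ∉ G.neighborFinset v := fun h ↦ hsv ((G.mem_neighborFinset v s).1 h).symm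
  rw [← card_neighborFinset_eq_degree, neighborFinset_deleteIncidenceSet hv,
    Finset.erase_eq_of_notMem hs, card_neighborFinset_eq_degree]

end DeleteIncidenceSet

section RelocateLeaf

variable {G T : SimpleGraph V} {s x y u v : V}

/-- The graph obtained from `T` by detaching the vertex `s`, typically a leaf, from all its
neighbors and subdividing the edge `xy` with it: the exchange that contradicts (C1) or (C2). -/
def relocateLeaf (T : SimpleGraph V) (s x y : V) : SimpleGraph V :=
  subdivideEdge (T.deleteIncidenceSet s) s x y

lemma relocateLeaf_adj_self (hsx : s ≠ x) (hsy : s ≠ y) :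
    (relocateLeaf T s x y).Adj s v ↔ v = x ∨ v = y := by
  simp only [relocateLeaf, subdivideEdge_adj hsx hsy, deleteIncidenceSet_adj, Sym2.eq_iff]
  grind

lemma adj_of_relocateLeaf_adj (hsx : s ≠ x) (hsy : s ≠ y) (hu : u ≠ s) (hv : v ≠ s)
    (h : (relocateLeaf T s x y).Adj u v) : T.Adj u v := by
  simp only [relocateLeaf, subdivideEdge_adj hsx hsy, deleteIncidenceSet_adj, Sym2.eq_iff] at h
  grind

lemma relocateLeaf_le (hTG : T ≤ G) (hsx : G.Adj s x) (hsy : G.Adj s y) :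
    relocateLeaf T s x y ≤ G :=
  subdivideEdge_le ((T.deleteIncidenceSet_le s).trans hTG) hsx hsy

lemma isTree_relocateLeaf [Fintype (T.neighborSet s)] (hT : T.IsTree) (hs : T.degree s = 1)
    (hxy : T.Adj x y) (hsx : s ≠ x) (hsy : s ≠ y) : (relocateLeaf T s x y).IsTree where
  connected := by
    rw [connected_iff_exists_forall_reachable]
    refine ⟨x, fun v ↦ ?_⟩
    obtain rfl | hv := eq_or_ne v s
    · exact ((relocateLeaf_adj_self hsx hsy).2 (.inl rfl)).symm.reachable
    · exact reachable_subdivideEdge hsx hsy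
        (reachable_deleteIncidenceSet hT.connected hs hsx.symm hv)
  isAcyclic := isAcyclic_subdivideEdge (hT.isAcyclic.anti (T.deleteIncidenceSet_le s))
    (isIsolated_deleteIncidenceSet T s) (deleteIncidenceSet_adj.2 ⟨hxy, hsx.symm, hsy.symm⟩)

variable [Fintype V]

lemma degree_relocateLeaf_self (hxy : T.Adj x y) (hsx : s ≠ x) (hsy : s ≠ y) :
    (relocateLeaf T s x y).degree s = 2 :=
  degree_subdivideEdge_self (isIsolated_deleteIncidenceSet T s)
    (deleteIncidenceSet_adj.2 ⟨hxy, hsx.symm, hsy.symm⟩)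

lemma degree_relocateLeaf_of_ne (hxy : T.Adj x y) (hsx : s ≠ x) (hsy : s ≠ y) (hv : v ≠ s) :
    (relocateLeaf T s x y).degree v = (T.deleteIncidenceSet s).degree v :=
  degree_subdivideEdge_of_ne (isIsolated_deleteIncidenceSet T s)
    (deleteIncidenceSet_adj.2 ⟨hxy, hsx.symm, hsy.symm⟩) hv

lemma degree_relocateLeaf_add_one (hxy : T.Adj x y) (hsx : s ≠ x) (hsy : s ≠ y)
    (hsv : T.Adj s v) : (relocateLeaf T s x y).degree v + 1 = T.degree v := by
  rw [degree_relocateLeaf_of_ne hxy hsx hsy hsv.ne', degree_deleteIncidenceSet_add_one hsv]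

lemma degree_relocateLeaf_of_not_adj (hxy : T.Adj x y) (hsx : s ≠ x) (hsy : s ≠ y) (hv : v ≠ s)
    (hsv : ¬ T.Adj s v) : (relocateLeaf T s x y).degree v = T.degree v := by
  rw [degree_relocateLeaf_of_ne hxy hsx hsy hv, degree_deleteIncidenceSet_of_not_adj hv hsv]

end RelocateLeaf

section LeafSet

variable [Fintype V] {T : SimpleGraph V} {s t x y v : V}

lemma mem_leafSet_s11 : v ∈ leafSet T ↔ T.degree v = 1 := by
  simp [leafSet]

lemma mem_branchSet : v ∈ branchSet T ↔ 3 ≤ T.degree v := by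
  simp [branchSet]

lemma eq_of_mem_leafSet (hs : s ∈ leafSet T) (hst : T.Adj s t) (hsv : T.Adj s v) : v = t :=
  (degree_eq_one_iff_existsUnique_adj.1 (mem_leafSet_s11.1 hs)).unique hsv hst

lemma leafSet_relocateLeaf_subset (hxy : T.Adj x y) (hsx : s ≠ x) (hsy : s ≠ y)
    (hs : s ∈ leafSet T) (hst : T.Adj s t) :
    leafSet (relocateLeaf T s x y) ⊆ insert t ((leafSet T).erase s) := by
  intro v hv
  rw [mem_leafSet_s11] at hv
  have hvs : v ≠ s := by
    rintro rfl
    simp [degree_relocateLeaf_self hxy hsx hsy] at hv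
  by_cases hsv : T.Adj s v
  · exact Finset.mem_insert.2 (.inl (eq_of_mem_leafSet hs hst hsv))
  · rw [degree_relocateLeaf_of_not_adj hxy hsx hsy hvs hsv] at hv
    simp [mem_leafSet_s11, hvs, hv]

lemma card_leafSet_relocateLeaf_le (hxy : T.Adj x y) (hsx : s ≠ x) (hsy : s ≠ y)
    (hs : s ∈ leafSet T) : #(leafSet (relocateLeaf T s x y)) ≤ #(leafSet T) := by
  obtain ⟨t, hst, -⟩ := degree_eq_one_iff_existsUnique_adj.1 (mem_leafSet_s11.1 hs)
  calc #(leafSet (relocateLeaf T s x y))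
      ≤ #(insert t ((leafSet T).erase s)) :=
        Finset.card_le_card (leafSet_relocateLeaf_subset hxy hsx hsy hs hst)
    _ ≤ #((leafSet T).erase s) + 1 := Finset.card_insert_le _ _
    _ = #(leafSet T) := Finset.card_erase_add_one hs

lemma card_leafSet_relocateLeaf_lt (hxy : T.Adj x y) (hsx : s ≠ x) (hsy : s ≠ y)
    (hs : s ∈ leafSet T) (hst : T.Adj s t) (ht : T.degree t ≠ 2) :
    #(leafSet (relocateLeaf T s x y)) < #(leafSet T) := by
  have htleaf : t ∉ leafSet (relocateLeaf T s x y) := fun h ↦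
    ht (by rw [← degree_relocateLeaf_add_one hxy hsx hsy hst, mem_leafSet_s11.1 h])
  have hsubset : leafSet (relocateLeaf T s x y) ⊆ (leafSet T).erase s :=
    (Finset.subset_insert_iff_of_notMem htleaf).1 (leafSet_relocateLeaf_subset hxy hsx hsy hs hst)
  exact (Finset.card_le_card hsubset).trans_lt (Finset.card_erase_lt_of_mem hs)

end LeafSet

section WalkSupport

variable {G : SimpleGraph V} {b r v w : V} {p : G.Walk b r}

lemma ncard_neighborSet_toSubgraph_eq_two (hp : p.IsPath) (hv : v ∈ p.support) (hvb : v ≠ b)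
    (hvr : v ≠ r) : (p.toSubgraph.neighborSet v).ncard = 2 := by
  obtain ⟨i, rfl, hi⟩ := Walk.mem_support_iff_exists_getVert.1 hv
  have hi0 : i ≠ 0 := by rintro rfl; exact hvb p.getVert_zero
  have hil : i ≠ p.length := by rintro rfl; exact hvr p.getVert_length
  exact hp.ncard_neighborSet_toSubgraph_internal_eq_two hi0 (by lia)

variable [Fintype (G.neighborSet v)]

lemma two_le_degree_of_mem_support (hp : p.IsPath) (hv : v ∈ p.support) (hvb : v ≠ b)
    (hvr : v ≠ r) : 2 ≤ G.degree v := by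
  rw [← ncard_neighborSet_toSubgraph_eq_two hp hv hvb hvr, ← card_neighborFinset_eq_degree,
    ← Set.ncard_coe_finset, coe_neighborFinset]
  exact Set.ncard_le_ncard (p.toSubgraph.neighborSet_subset v) (Set.toFinite _)

lemma mem_support_of_adj_of_degree_le_two (hp : p.IsPath) (hv : v ∈ p.support) (hvb : v ≠ b)
    (hvr : v ≠ r) (hdeg : G.degree v ≤ 2) (hvw : G.Adj v w) : w ∈ p.support := by
  have hnbr : p.toSubgraph.neighborSet v = G.neighborSet v := by
    refine Set.eq_of_subset_of_ncard_le (p.toSubgraph.neighborSet_subset v) ?_ (Set.toFinite _)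
    rwa [ncard_neighborSet_toSubgraph_eq_two hp hv hvb hvr, ← coe_neighborFinset,
      Set.ncard_coe_finset, card_neighborFinset_eq_degree]
  have hadj : p.toSubgraph.Adj v w := hnbr.ge hvw
  exact p.mem_verts_toSubgraph.1 hadj.snd_mem

end WalkSupport

section ReducibleStem

section LocallyFinite

variable {T : SimpleGraph V} [T.LocallyFinite] {v w : V}

/-- The vertex set of the reducible stem `R_Stem(T)`, encoded as in `rstemCard`: a vertex belongs to
it if every path to it from a leaf meets a branch vertex. -/
def reducibleStem (T : SimpleGraph V) [T.LocallyFinite] : Set V :=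
  {v | ∀ x, T.degree x = 1 → ∀ p : T.Walk x v, p.IsPath → ∃ w ∈ p.support, 3 ≤ T.degree w}

lemma exists_mem_support_of_mem_reducibleStem (hv : v ∈ reducibleStem T) (hw : T.degree w = 1)
    (p : T.Walk w v) : ∃ u ∈ p.support, 3 ≤ T.degree u := by
  obtain ⟨u, hu, hdeg⟩ := hv w hw p.bypass p.bypass_isPath
  exact ⟨u, p.support_bypass_subset_support hu, hdeg⟩

lemma degree_ne_one_of_mem_reducibleStem (hv : v ∈ reducibleStem T) : T.degree v ≠ 1 := by
  intro h
  simpa [h] using exists_mem_support_of_mem_reducibleStem hv h .nil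

lemma mem_reducibleStem_of_adj (hv : v ∈ reducibleStem T) (hdeg : T.degree v < 3)
    (hvw : T.Adj v w) : w ∈ reducibleStem T := by
  intro x hx p _
  obtain ⟨u, hu, hu3⟩ := exists_mem_support_of_mem_reducibleStem hv hx (p.concat hvw.symm)
  obtain hu | rfl := by simpa [Walk.support_concat] using hu
  · exact ⟨u, hu, hu3⟩
  · lia

/- Together with the two preceding lemmas this says that the reducible stem is the largest vertex
set that contains no leaf and is closed under taking neighbors of its non-branch vertices. -/
lemma subset_reducibleStem {S : Set V} (hleaf : ∀ v ∈ S, T.degree v ≠ 1)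
    (hadj : ∀ v ∈ S, T.degree v < 3 → ∀ w, T.Adj v w → w ∈ S) : S ⊆ reducibleStem T := by
  intro v hv
  have mem_of_walk : ∀ {x : V} (p : T.Walk x v), (∀ w ∈ p.support, T.degree w < 3) → x ∈ S := by
    intro x p hdeg
    induction p with
    | nil => exact hv
    | cons h q ih =>
      simp only [Walk.support_cons, List.mem_cons, forall_eq_or_imp] at hdeg
      exact hadj _ (ih hv hdeg.2) (hdeg.2 _ q.start_mem_support) _ h.symm
  intro x hx p _
  by_contra! hdeg
  exact hleaf x (mem_of_walk p hdeg) hx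

lemma support_subset_reducibleStem {b r : V} {p : T.Walk b r} (hp : p.IsPath)
    (hb : 3 ≤ T.degree b) (hr : 3 ≤ T.degree r) : {v | v ∈ p.support} ⊆ reducibleStem T := by
  have hne {v : V} (hdeg : T.degree v < 3) : v ≠ b ∧ v ≠ r :=
    ⟨by rintro rfl; lia, by rintro rfl; lia⟩
  apply subset_reducibleStem
  · intro v hv h
    obtain ⟨hvb, hvr⟩ := hne (v := v) (by lia)
    have := two_le_degree_of_mem_support hp hv hvb hvr
    lia
  · intro v hv hdeg w hvw
    obtain ⟨hvb, hvr⟩ := hne hdeg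
    exact mem_support_of_adj_of_degree_le_two hp hv hvb hvr (by lia) hvw

end LocallyFinite

variable [Fintype V] {T : SimpleGraph V} {s t x y : V}

lemma rstemCard_eq_ncard (T : SimpleGraph V) : rstemCard T = (reducibleStem T).ncard :=
  rfl

lemma notMem_reducibleStem_of_mem_leafSet (hs : s ∈ leafSet T) : s ∉ reducibleStem T :=
  fun h ↦ degree_ne_one_of_mem_reducibleStem h (mem_leafSet_s11.1 hs)

lemma insert_subset_reducibleStem_relocateLeaf (hxy : T.Adj x y) (hx : x ∈ reducibleStem T)
    (hy : y ∈ reducibleStem T) (hs : s ∈ leafSet T) (hst : T.Adj s t) (ht : T.degree t < 3) :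
    insert s (reducibleStem T) ⊆ reducibleStem (relocateLeaf T s x y) := by
  have hs' : s ∉ reducibleStem T := notMem_reducibleStem_of_mem_leafSet hs
  have hsx : s ≠ x := by rintro rfl; exact hs' hx
  have hsy : s ≠ y := by rintro rfl; exact hs' hy
  have hne {v : V} (hv : v ∈ reducibleStem T) : v ≠ s := by rintro rfl; exact hs' hv
  have hdeg {v : V} (hv : v ∈ reducibleStem T) : (relocateLeaf T s x y).degree v = T.degree v := by
    refine degree_relocateLeaf_of_not_adj hxy hsx hsy (hne hv) fun hsv ↦ hs' ?_
    obtain rfl := eq_of_mem_leafSet hs hst hsv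
    exact mem_reducibleStem_of_adj hv ht hsv.symm
  apply subset_reducibleStem
  · rintro v (rfl | hv)
    · simp [degree_relocateLeaf_self hxy hsx hsy]
    · rw [hdeg hv]
      exact degree_ne_one_of_mem_reducibleStem hv
  · rintro v (rfl | hv) hdeg3 w hvw
    · obtain rfl | rfl := (relocateLeaf_adj_self hsx hsy).1 hvw
      exacts [.inr hx, .inr hy]
    · rw [hdeg hv] at hdeg3
      obtain rfl | hws := eq_or_ne w s
      · exact .inl rfl
      · exact .inr (mem_reducibleStem_of_adj hv hdeg3
          (adj_of_relocateLeaf_adj hsx hsy (hne hv) hws hvw))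

lemma rstemCard_lt_rstemCard_relocateLeaf (hxy : T.Adj x y) (hx : x ∈ reducibleStem T)
    (hy : y ∈ reducibleStem T) (hs : s ∈ leafSet T) (hst : T.Adj s t) (ht : T.degree t < 3) :
    rstemCard T < rstemCard (relocateLeaf T s x y) := by
  rw [rstemCard_eq_ncard, rstemCard_eq_ncard, ← Nat.succ_le_iff, Nat.succ_eq_add_one,
    ← Set.ncard_insert_of_notMem (notMem_reducibleStem_of_mem_leafSet hs)]
  exact Set.ncard_le_ncard (insert_subset_reducibleStem_relocateLeaf hxy hx hy hs hst ht)

end ReducibleStem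

theorem stmt11_general [Fintype V] {G T : SimpleGraph V} (hT : T ≤ G) (hTree : T.IsTree)
    (hC1 : ∀ T' : SimpleGraph V, T' ≤ G → T'.IsTree →
      (leafSet T).card ≤ (leafSet T').card)
    (hC2 : ∀ T' : SimpleGraph V, T' ≤ G → T'.IsTree →
      (leafSet T').card = (leafSet T).card → rstemCard T' ≤ rstemCard T)
    {s x y : V} (hs : s ∈ leafSet T) (hx : x ∈ reducibleStem T) (hy : y ∈ reducibleStem T)
    (hxy : T.Adj x y) (hsx : G.Adj s x) : ¬ G.Adj s y := by
  intro hsy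
  obtain ⟨t, hst, -⟩ := degree_eq_one_iff_existsUnique_adj.1 (mem_leafSet_s11.1 hs)
  have hle : relocateLeaf T s x y ≤ G := relocateLeaf_le hT hsx hsy
  have htree : (relocateLeaf T s x y).IsTree :=
    isTree_relocateLeaf hTree (mem_leafSet_s11.1 hs) hxy hsx.ne hsy.ne
  have hleaves := hC1 _ hle htree
  have ht : T.degree t = 2 := by
    by_contra ht
    exact hleaves.not_gt (card_leafSet_relocateLeaf_lt hxy hsx.ne hsy.ne hs hst ht)
  have hcard : #(leafSet (relocateLeaf T s x y)) = #(leafSet T) :=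
    (card_leafSet_relocateLeaf_le hxy hsx.ne hsy.ne hs).antisymm hleaves
  exact (hC2 _ hle htree hcard).not_gt
    (rstemCard_lt_rstemCard_relocateLeaf hxy hx hy hs hst (by lia))

/-- Let `T` be a spanning tree of the connected graph `G` chosen so that (C1)
`|L(T)|` is minimum and (C2) `|V(R_Stem(T))|` is maximum subject to (C1), with
`B(T) ≠ ∅`. Let `b, r` be branch vertices such that `P_T[b,r]` contains no branch vertex
other than `b` and `r`, let `s` be a leaf, let `x ≠ b` be a vertex of `P_T[b,r]` and `xm`
its predecessor on `P_T[b,r]` oriented from `b` to `r`. If `sx ∈ E(G)` then `s xm ∉ E(G)`. -/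
theorem stmt11 {V : Type*} [Fintype V] (G T : SimpleGraph V) (hG : G.Connected)
    (hT : T ≤ G) (hTree : T.IsTree)
    (hC1 : ∀ T' : SimpleGraph V, T' ≤ G → T'.IsTree →
      (leafSet T).card ≤ (leafSet T').card)
    (hC2 : ∀ T' : SimpleGraph V, T' ≤ G → T'.IsTree →
      (leafSet T').card = (leafSet T).card → rstemCard T' ≤ rstemCard T)
    (hB : (branchSet T).Nonempty)
    (b r : V) (hb : b ∈ branchSet T) (hr : r ∈ branchSet T) (hbr : b ≠ r)
    (p : T.Walk b r) (hp : p.IsPath)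
    (hint : ∀ v ∈ p.support, 3 ≤ T.degree v → v = b ∨ v = r)
    (s x xm : V) (hs : s ∈ leafSet T) (hxb : x ≠ b)
    (hpred : [xm, x] <:+: p.support)
    (hsx : G.Adj s x) :
    ¬ G.Adj s xm := by
  have hstem : ∀ v ∈ p.support, v ∈ reducibleStem T :=
    support_subset_reducibleStem hp (mem_branchSet.1 hb) (mem_branchSet.1 hr)
  have hchain : [xm, x].IsChain T.Adj := p.isChain_adj_support.infix hpred
  have hadj : T.Adj xm x := isChain_pair.1 hchain
  exact stmt11_general hT hTree hC1 hC2 hs (hstem x (hpred.subset (by simp)))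
    (hstem xm (hpred.subset (by simp))) hadj.symm hsx
end

section
/- Let G be a connected K_{1,4}-free finite simple graph and let T be a spanning tree of G chosen so that (C1) |L(T)| is minimum among all spanning trees of G and (C2) |V(R_Stem(T))| is maximum subject to (C1), and suppose B(T) ≠ ∅. Let b, r be branch vertices of T such that the path P_T[b,r] contains no branch vertex other than b and r, and let x be an internal vertex of P_T[b,r] (x ≠ b and x ≠ r). Then x has at most one neighbor in G belonging to L(T). -/
open SimpleGraph Finset List

open scoped Classical

variable {V : Type*}

/-!
Suppose that `x` has two leaf neighbours `s` and `t` in `G`. Since `x` is not a branch vertex, it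
has exactly two neighbours `u` and `v` in `T`, and both lie on the path between the branch vertices
`b` and `r`, hence in the reducible stem. As `G` is `K_{1,4}`-free, two of `s, t, u, v` are adjacent
in `G`, and each case contradicts the choice of `T`.

* `s` and `t`: the path of `T` from `s` to `t` contains a branch vertex; exchanging an edge of the
  path at this vertex for `st` yields a spanning tree with fewer leaves.
* `u` and `v`: replacing the path `uxv` by the edge `uv` and attaching `x` to `s` preserves the
  number of leaves, but now `x` and `t` are adjacent leaves, which is the previous case.
* a leaf, say `s`, and `u` or `v`, say `u`: move `s` into the edge `xu`. If the neighbour of `s` in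
  `T` is a branch vertex, then a leaf is lost. Otherwise the number of leaves is preserved and the
  stem gains `s`.
-/

section Reattach

/-- The graph obtained from `T` by reattaching the vertex `b` from its neighbour `a` to `c`: the
edge `ab` is replaced by `cb`. Every tree of the proof arises from `T` by two such moves. -/
def reattach (T : SimpleGraph V) (a b c : V) : SimpleGraph V :=
  T.deleteEdges {s(a, b)} ⊔ edge c b

variable {G T : SimpleGraph V} {a b c v w : V}

lemma reattach_adj : (reattach T a b c).Adj v w ↔
    (T.Adj v w ∧ s(v, w) ≠ s(a, b)) ∨ (s(c, b) = s(v, w) ∧ v ≠ w) := by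
  simp only [reattach, sup_adj, deleteEdges_adj, Set.mem_singleton_iff, adj_edge, ne_eq]

lemma reattach_adj_new (hcb : c ≠ b) : (reattach T a b c).Adj c b :=
  reattach_adj.2 (.inr ⟨rfl, hcb⟩)

lemma reattach_adj_of_ne (h : T.Adj v w) (hne : s(v, w) ≠ s(a, b)) :
    (reattach T a b c).Adj v w :=
  reattach_adj.2 (.inl ⟨h, hne⟩)

lemma reattach_le (hT : T.deleteEdges {s(a, b)} ≤ G) (hcb : G.Adj c b) : reattach T a b c ≤ G :=
  sup_le hT ((edge_le_iff G).2 (.inr hcb))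

lemma not_reachable_deleteEdges_of_reachable (hT : T.IsAcyclic) (hab : T.Adj a b)
    (hac : (T.deleteEdges {s(a, b)}).Reachable a c) :
    ¬ (T.deleteEdges {s(a, b)}).Reachable c b := fun hcb =>
  isBridge_iff.1 (isAcyclic_iff_forall_adj_isBridge.1 hT hab) (hac.trans hcb)

lemma ne_of_reachable_deleteEdges (hT : T.IsAcyclic) (hab : T.Adj a b)
    (hac : (T.deleteEdges {s(a, b)}).Reachable a c) : c ≠ b := by
  rintro rfl
  exact not_reachable_deleteEdges_of_reachable hT hab hac .rfl

lemma isTree_reattach (hT : T.IsTree) (hab : T.Adj a b)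
    (hac : (T.deleteEdges {s(a, b)}).Reachable a c) : (reattach T a b c).IsTree := by
  have hcut := not_reachable_deleteEdges_of_reachable hT.isAcyclic hab hac
  have hcb := ne_of_reachable_deleteEdges hT.isAcyclic hab hac
  have hreach : (reattach T a b c).Reachable a b :=
    (hac.mono le_sup_left).trans (reattach_adj_new hcb).reachable
  have hadj : ∀ v w, T.Adj v w → (reattach T a b c).Reachable v w := by
    intro v w h
    by_cases he : s(v, w) = s(a, b)
    · rcases Sym2.eq_iff.1 he with ⟨rfl, rfl⟩ | ⟨rfl, rfl⟩
      exacts [hreach, hreach.symm]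
    · exact (reattach_adj_of_ne h he).reachable
  have hpre : (reattach T a b c).Preconnected := fun v w => by
    obtain ⟨p⟩ := hT.connected v w
    induction p with
    | nil => exact .rfl
    | cons h _ ih => exact (hadj _ _ h).trans ih
  have := hT.connected.nonempty
  exact ⟨⟨hpre⟩, (hT.isAcyclic.anti (deleteEdges_le _)).sup_edge_of_not_reachable hcut⟩

lemma deleteEdges_reattach (hT : T.IsAcyclic) (hab : T.Adj a b)
    (hac : (T.deleteEdges {s(a, b)}).Reachable a c) :
    (reattach T a b c).deleteEdges {s(c, b)} = T.deleteEdges {s(a, b)} := by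
  have hcb : ¬ (T.deleteEdges {s(a, b)}).Adj c b := fun h =>
    not_reachable_deleteEdges_of_reachable hT hab hac h.reachable
  rw [reattach, deleteEdges_sup, deleteEdges_edge (Set.mem_singleton _), sup_bot_eq,
    deleteEdges_eq_self, Set.disjoint_singleton_right]
  exact hcb

end Reattach

section Degree

variable {G : SimpleGraph V} {a b v : V}

lemma degree_sup_edge [Fintype (G.neighborSet v)] [Fintype ((G ⊔ edge a b).neighborSet v)]
    (hne : a ≠ b) (hab : ¬ G.Adj a b) :
    (G ⊔ edge a b).degree v =
      G.degree v + ((if v = a then 1 else 0) + if v = b then 1 else 0) := by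
  have hba : ¬ G.Adj b a := fun h => hab h.symm
  simp only [← card_neighborFinset_eq_degree]
  by_cases hva : v = a
  · subst hva
    have : (G ⊔ edge v b).neighborFinset v = insert b (G.neighborFinset v) := by
      ext w
      simp only [mem_neighborFinset, sup_adj, edge_adj, Finset.mem_insert]
      grind
    simp [this, hab, hne]
  by_cases hvb : v = b
  · subst hvb
    have : (G ⊔ edge a v).neighborFinset v = insert a (G.neighborFinset v) := by
      ext w
      simp only [mem_neighborFinset, sup_adj, edge_adj, Finset.mem_insert]
      grind
    simp [this, hba, hne.symm]
  have : (G ⊔ edge a b).neighborFinset v = G.neighborFinset v := by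
    ext w
    simp [edge_adj, hva, hvb]
  simp [this, hva, hvb]

end Degree

section ShiftsDegree

variable [Fintype V] {T T' T'' : SimpleGraph V} {a b c v : V}

/-- `T'` has the same degrees as `T`, except that one unit of degree has moved from `a` to `c`;
for `a = c` all degrees agree. The indicators are placed so that no subtraction occurs. -/
def ShiftsDegree (T T' : SimpleGraph V) (a c : V) : Prop :=
  ∀ v, T'.degree v + (if v = a then 1 else 0) = T.degree v + if v = c then 1 else 0

lemma shiftsDegree_reattach (hT : T.IsAcyclic) (hab : T.Adj a b)
    (hac : (T.deleteEdges {s(a, b)}).Reachable a c) :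
    ShiftsDegree T (reattach T a b c) a c := fun v => by
  have hcut := not_reachable_deleteEdges_of_reachable hT hab hac
  have hcb := ne_of_reachable_deleteEdges hT hab hac
  have hback : T.deleteEdges {s(a, b)} ⊔ edge a b = T :=
    sdiff_sup_cancel ((edge_le_iff T).2 (.inr hab))
  have hold : T.degree v = (T.deleteEdges {s(a, b)}).degree v +
      ((if v = a then 1 else 0) + if v = b then 1 else 0) := by
    convert degree_sup_edge (G := T.deleteEdges {s(a, b)}) (v := v) hab.ne (by simp) using 2
    exact hback.symm
  have hnew : (reattach T a b c).degree v = (T.deleteEdges {s(a, b)}).degree v +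
      ((if v = c then 1 else 0) + if v = b then 1 else 0) := by
    convert degree_sup_edge hcb fun h => hcut h.reachable using 2
    rfl
  omega

namespace ShiftsDegree

lemma trans (h : ShiftsDegree T T' a b) (h' : ShiftsDegree T' T'' b c) :
    ShiftsDegree T T'' a c := fun v => by
  have := h v
  have := h' v
  omega

lemma degree_source (h : ShiftsDegree T T' a c) (hne : a ≠ c) :
    T'.degree a + 1 = T.degree a := by
  simpa [hne] using h a

lemma degree_target (h : ShiftsDegree T T' a c) (hne : a ≠ c) :
    T'.degree c = T.degree c + 1 := by
  simpa [hne.symm] using h c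

lemma degree_of_ne (h : ShiftsDegree T T' a c) (hva : v ≠ a) (hvc : v ≠ c) :
    T'.degree v = T.degree v := by
  simpa [hva, hvc] using h v

lemma leafSet_subset (h : ShiftsDegree T T' a c) (hc : T.degree c = 1) :
    leafSet T' ⊆ insert a ((leafSet T).erase c) := by
  intro v hv
  have := h v
  grind [leafSet]

lemma card_leafSet_le (h : ShiftsDegree T T' a c) (hc : T.degree c = 1) :
    (leafSet T').card ≤ (leafSet T).card := by
  have hcL : c ∈ leafSet T := by simpa [leafSet] using hc
  calc (leafSet T').card
      ≤ (insert a ((leafSet T).erase c)).card := Finset.card_le_card (h.leafSet_subset hc)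
    _ ≤ ((leafSet T).erase c).card + 1 := Finset.card_insert_le _ _
    _ = (leafSet T).card := Finset.card_erase_add_one hcL

lemma card_leafSet_lt (h : ShiftsDegree T T' a c) (hc : T.degree c = 1) (ha : 3 ≤ T.degree a) :
    (leafSet T').card < (leafSet T).card := by
  have hcL : c ∈ leafSet T := by simpa [leafSet] using hc
  have haL : a ∉ leafSet T' := by
    have := h.degree_source (by rintro rfl; omega)
    simp only [leafSet, Finset.mem_filter, Finset.mem_univ, true_and]
    omega
  calc (leafSet T').card
      ≤ ((leafSet T).erase c).card :=
        Finset.card_le_card ((Finset.subset_insert_iff_of_notMem haL).1 (h.leafSet_subset hc))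
    _ < (leafSet T).card := Finset.card_erase_lt_of_mem hcL

end ShiftsDegree

end ShiftsDegree

section Paths

variable {G : SimpleGraph V} {a s t u v x y : V}

lemma exists_adj_adj_mem_support {p : G.Walk u v} (hp : p.IsPath) (hx : x ∈ p.support)
    (hxu : x ≠ u) (hxv : x ≠ v) :
    ∃ y z, y ≠ z ∧ G.Adj x y ∧ G.Adj x z ∧ y ∈ p.support ∧ z ∈ p.support := by
  obtain ⟨i, rfl, hi⟩ := Walk.mem_support_iff_exists_getVert.1 hx
  have hi0 : i ≠ 0 := by
    rintro rfl
    exact hxu p.getVert_zero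
  have hil : i ≠ p.length := by
    rintro rfl
    exact hxv p.getVert_length
  obtain ⟨j, rfl⟩ := Nat.exists_eq_succ_of_ne_zero hi0
  refine ⟨p.getVert j, p.getVert (j + 1 + 1), fun h => ?_,
    (p.adj_getVert_succ (by omega)).symm, p.adj_getVert_succ (by omega),
    p.getVert_mem_support _, p.getVert_mem_support _⟩
  have := hp.getVert_injOn (Set.mem_ofPred.2 (by omega)) (Set.mem_ofPred.2 (by omega)) h
  omega

lemma two_le_degree_of_mem_support_s12 [Fintype (G.neighborSet x)] {p : G.Walk u v} (hp : p.IsPath)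
    (hx : x ∈ p.support) (hxu : x ≠ u) (hxv : x ≠ v) : 2 ≤ G.degree x := by
  obtain ⟨y, z, hyz, hy, hz, -, -⟩ := exists_adj_adj_mem_support hp hx hxu hxv
  exact Finset.one_lt_card.2 ⟨y, by simpa, z, by simpa, hyz⟩

lemma three_le_degree_of_adj_notMem_support [Fintype (G.neighborSet x)] {p : G.Walk u v}
    (hp : p.IsPath) (hx : x ∈ p.support) (hxu : x ≠ u) (hxv : x ≠ v) (hxy : G.Adj x y)
    (hy : y ∉ p.support) : 3 ≤ G.degree x := by
  obtain ⟨w, z, hwz, hw, hz, hwp, hzp⟩ := exists_adj_adj_mem_support hp hx hxu hxv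
  exact Finset.two_lt_card.2 ⟨w, by simpa, z, by simpa, y, by simpa, hwz,
    fun h => hy (h ▸ hwp), fun h => hy (h ▸ hzp)⟩

lemma mem_support_of_degree_eq_one [Fintype (G.neighborSet u)] (hu : G.degree u = 1)
    (huv : u ≠ v) (p : G.Walk u v) (huy : G.Adj u y) : y ∈ p.support := by
  have hy : y = p.snd := (degree_eq_one_iff_existsUnique_adj.1 hu).unique huy
    (p.adj_snd (Walk.not_nil_of_ne huv))
  exact hy ▸ p.getVert_mem_support 1

lemma reachable_deleteEdges_of_degree_eq_one [Fintype (G.neighborSet s)] (hG : G.Connected)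
    (hs : G.degree s = 1) (has : G.Adj a s) (hxs : x ≠ s) :
    (G.deleteEdges {s(a, s)}).Reachable a x := by
  obtain ⟨p, hp⟩ := (hG s x).exists_isPath
  cases p with
  | nil => exact absurd rfl hxs
  | cons h p =>
    obtain rfl := (degree_eq_one_iff_existsUnique_adj.1 hs).unique h has.symm
    exact reachable_deleteEdges_iff_exists_walk.2
      ⟨p, fun he => ((Walk.cons_isPath_iff _ _).1 hp).2 (p.snd_mem_support_of_mem_edges he)⟩

lemma exists_three_le_degree_mem_support [LocallyFinite G] (hG : G.Connected)
    (hs : G.degree s = 1) (ht : G.degree t = 1) (hst : s ≠ t) (hb : ∃ b, 3 ≤ G.degree b)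
    {p : G.Walk s t} (hp : p.IsPath) : ∃ w ∈ p.support, 3 ≤ G.degree w := by
  obtain ⟨b, hb⟩ := hb
  by_cases hbp : b ∈ p.support
  · exact ⟨b, hbp, hb⟩
  obtain ⟨q⟩ := hG s b
  obtain ⟨⟨⟨w, y⟩, hwy⟩, -, hw, hy⟩ :=
    q.exists_boundary_dart {v | v ∈ p.support} p.start_mem_support hbp
  have hws : w ≠ s := by
    rintro rfl
    exact hy (mem_support_of_degree_eq_one hs hst p hwy)
  have hwt : w ≠ t := by
    rintro rfl
    exact hy (by simpa using mem_support_of_degree_eq_one ht hst.symm p.reverse hwy)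
  exact ⟨w, hw, three_le_degree_of_adj_notMem_support hp hw hws hwt hwy hy⟩

lemma exists_adj_reachable_deleteEdges_of_degree_eq_one [LocallyFinite G] (hG : G.Connected)
    (hs : G.degree s = 1) (ht : G.degree t = 1) (hst : s ≠ t) (hb : ∃ b, 3 ≤ G.degree b) :
    ∃ w y, 3 ≤ G.degree w ∧ G.Adj w y ∧ (G.deleteEdges {s(w, y)}).Reachable w s ∧
      (G.deleteEdges {s(w, y)}).Reachable y t := by
  obtain ⟨p, hp⟩ := (hG s t).exists_isPath
  obtain ⟨w, hwp, hw⟩ := exists_three_le_degree_mem_support hG hs ht hst hb hp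
  obtain ⟨q, q', rfl⟩ := Walk.mem_support_iff_exists_append.1 hwp
  cases q' with
  | nil => omega
  | @cons _ y _ hwy q' =>
    have hnodup := hp.isTrail.edges_nodup
    simp only [Walk.edges_append, Walk.edges_cons, List.nodup_append, List.nodup_cons] at hnodup
    refine ⟨w, y, hw, hwy, reachable_deleteEdges_iff_exists_walk.2 ⟨q.reverse, ?_⟩,
      reachable_deleteEdges_iff_exists_walk.2 ⟨q', hnodup.2.1.1⟩⟩
    rw [Walk.edges_reverse, List.mem_reverse]
    exact fun h => hnodup.2.2 _ h _ List.mem_cons_self rfl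

end Paths

section OffStem

variable [Fintype V] {T T' : SimpleGraph V} {b r s v : V}

/-- The vertices of `T` outside its reducible stem: those reached from a leaf without meeting a
branch vertex. The inductive form avoids carrying paths through the comparison of two stems. -/
inductive OffStem (T : SimpleGraph V) : V → Prop
  | leaf (v : V) : T.degree v = 1 → OffStem T v
  | step (u v : V) : OffStem T u → T.Adj u v → T.degree v < 3 → OffStem T v

lemma offStem_iff_exists_isPath : OffStem T v ↔
    ∃ x, T.degree x = 1 ∧ ∃ p : T.Walk x v, p.IsPath ∧ ∀ w ∈ p.support, T.degree w < 3 := by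
  constructor
  · intro h
    suffices ∃ x, T.degree x = 1 ∧ ∃ p : T.Walk x v, ∀ w ∈ p.support, T.degree w < 3 by
      obtain ⟨x, hx, p, hp⟩ := this
      exact ⟨x, hx, p.toPath, p.toPath.2, fun w hw => hp w (p.support_toPath_subset_support hw)⟩
    induction h with
    | leaf v hv => exact ⟨v, hv, .nil, by simp [hv]⟩
    | step u v _ huv hv ih =>
      obtain ⟨x, hx, p, hp⟩ := ih
      exact ⟨x, hx, p.concat huv, by simpa [Walk.support_concat, or_imp, forall_and, hv] using hp⟩
  · rintro ⟨x, hx, p, -, hp⟩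
    have hoff : OffStem T x := .leaf x hx
    clear hx
    induction p with
    | nil => exact hoff
    | cons h p ih =>
      exact ih (fun w hw => hp w (by simp [hw])) (.step _ _ hoff h (hp _ (by simp)))

lemma rstemCard_eq_ncard_not_offStem : rstemCard T = {v | ¬ OffStem T v}.ncard := by
  simp only [rstemCard, offStem_iff_exists_isPath, not_exists, not_and, not_forall, not_lt,
    exists_prop]

lemma rstemCard_lt_rstemCard (h : ∀ v, OffStem T' v → OffStem T v) (hs : OffStem T s)
    (hs' : ¬ OffStem T' s) : rstemCard T < rstemCard T' := by
  simp only [rstemCard_eq_ncard_not_offStem]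
  exact Set.ncard_lt_ncard
    ((Set.ssubset_iff_of_subset fun v => mt (h v)).2 ⟨s, hs', not_not_intro hs⟩)

lemma not_offStem_of_mem_support {p : T.Walk b r} (hp : p.IsPath) (hb : 3 ≤ T.degree b)
    (hr : 3 ≤ T.degree r) (hv : v ∈ p.support) : ¬ OffStem T v := by
  intro hoff
  have hne : ∀ {v}, T.degree v < 3 → v ≠ b ∧ v ≠ r := fun h =>
    ⟨by rintro rfl; omega, by rintro rfl; omega⟩
  induction hoff with
  | leaf v hd =>
    obtain ⟨hvb, hvr⟩ := hne (v := v) (by omega)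
    have := two_le_degree_of_mem_support_s12 hp hv hvb hvr
    omega
  | step u v _ huv hd ih =>
    obtain ⟨hvb, hvr⟩ := hne hd
    have := three_le_degree_of_adj_notMem_support hp hv hvb hvr huv.symm ih
    omega

end OffStem

section InsertLeaf

/-- The graph obtained from `T` by detaching the leaf `s` from its neighbour `s'` and inserting it
into the edge `xy`: first `s` is reattached from `s'` to `x`, then `y` from `x` to `s`. -/
def insertLeaf (T : SimpleGraph V) (s' s x y : V) : SimpleGraph V :=
  reattach (reattach T s' s x) x y s

variable {G T : SimpleGraph V} {s s' u v x y : V}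

lemma adj_of_insertLeaf_adj (h : (insertLeaf T s' s x y).Adj u v) (hu : u ≠ s) (hv : v ≠ s) :
    T.Adj u v := by
  simp only [insertLeaf, reattach_adj] at h
  grind

lemma eq_or_eq_of_insertLeaf_adj (hs : ∀ u, T.Adj u s → u = s')
    (h : (insertLeaf T s' s x y).Adj u s) : u = x ∨ u = y := by
  have := hs u
  simp only [insertLeaf, reattach_adj] at h
  grind

lemma insertLeaf_le (hT : T ≤ G) (hxs : G.Adj x s) (hys : G.Adj y s) :
    insertLeaf T s' s x y ≤ G :=
  reattach_le ((deleteEdges_le _).trans (reattach_le ((deleteEdges_le _).trans hT) hxs)) hys.symm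

variable [Fintype V]

lemma isTree_insertLeaf_and_shiftsDegree (hT : T.IsTree) (hs : T.degree s = 1) (hs' : T.Adj s' s)
    (hxy : T.Adj x y) (hxs : x ≠ s) (hys : y ≠ s) :
    (insertLeaf T s' s x y).IsTree ∧ ShiftsDegree T (insertLeaf T s' s x y) s' s := by
  have hreach := reachable_deleteEdges_of_degree_eq_one hT.connected hs hs' hxs
  have htree := isTree_reattach hT hs' hreach
  have hxy' : (reattach T s' s x).Adj x y := reattach_adj_of_ne hxy (by grind)
  have hreach' : ((reattach T s' s x).deleteEdges {s(x, y)}).Reachable x s :=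
    Adj.reachable (deleteEdges_adj.2 ⟨reattach_adj_new hxs, by grind⟩)
  exact ⟨isTree_reattach htree hxy' hreach',
    (shiftsDegree_reattach hT.isAcyclic hs' hreach).trans
      (shiftsDegree_reattach htree.isAcyclic hxy' hreach')⟩

lemma offStem_of_offStem_insertLeaf (hshift : ShiftsDegree T (insertLeaf T s' s x y) s' s)
    (hs : T.degree s = 1) (hs' : T.Adj s' s) (hd : T.degree s' < 3) (hx : ¬ OffStem T x)
    (hy : ¬ OffStem T y) (h : OffStem (insertLeaf T s' s x y) v) : OffStem T v ∧ v ≠ s := by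
  have hoff : OffStem T s' := .step s s' (.leaf s hs) hs'.symm hd
  induction h with
  | leaf v hv =>
    by_cases hvs : v = s
    · subst hvs
      have := hshift.degree_target hs'.ne
      omega
    by_cases hvs' : v = s'
    · exact ⟨hvs' ▸ hoff, hvs⟩
    · exact ⟨.leaf v (by rw [← hshift.degree_of_ne hvs' hvs, hv]), hvs⟩
  | step u v _ huv hv ih =>
    by_cases hvs : v = s
    · subst hvs
      have hnbr : ∀ u, T.Adj u v → u = s' := fun u hu =>
        (degree_eq_one_iff_existsUnique_adj.1 hs).unique hu.symm hs'.symm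
      rcases eq_or_eq_of_insertLeaf_adj hnbr huv with rfl | rfl
      exacts [absurd ih.1 hx, absurd ih.1 hy]
    by_cases hvs' : v = s'
    · exact ⟨hvs' ▸ hoff, hvs⟩
    · exact ⟨.step u v ih.1 (adj_of_insertLeaf_adj huv ih.2 hvs)
        (by rwa [← hshift.degree_of_ne hvs' hvs]), hvs⟩

end InsertLeaf

/-- A spanning tree of `G` with the minimum number of leaves, i.e. one satisfying (C1). -/
structure IsMinLeafSpanningTree [Fintype V] (G T : SimpleGraph V) : Prop where
  le : T ≤ G
  isTree : T.IsTree
  card_leafSet_le : ∀ T' : SimpleGraph V, T' ≤ G → T'.IsTree →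
    (leafSet T).card ≤ (leafSet T').card

namespace IsMinLeafSpanningTree

variable [Fintype V] {G T T' : SimpleGraph V} {s t u v x y : V}

lemma of_card_leafSet_le (hT : IsMinLeafSpanningTree G T) (hle : T' ≤ G) (htree : T'.IsTree)
    (hcard : (leafSet T').card ≤ (leafSet T).card) : IsMinLeafSpanningTree G T' :=
  ⟨hle, htree, fun S hS hS' => hcard.trans (hT.card_leafSet_le S hS hS')⟩

lemma not_adj_of_degree_eq_one (hT : IsMinLeafSpanningTree G T) (hb : ∃ b, 3 ≤ T.degree b)
    (hs : T.degree s = 1) (ht : T.degree t = 1) : ¬ G.Adj s t := by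
  intro hst
  obtain ⟨w, y, hw, hwy, hws, hyt⟩ :=
    exists_adj_reachable_deleteEdges_of_degree_eq_one hT.isTree.connected hs ht hst.ne hb
  have htw : t ≠ w := by
    rintro rfl
    omega
  have hsy := ne_of_reachable_deleteEdges hT.isTree.isAcyclic hwy hws
  have hT₁ := isTree_reattach hT.isTree hwy hws
  have hshift₁ := shiftsDegree_reattach hT.isTree.isAcyclic hwy hws
  have hdel : (reattach T w y s).deleteEdges {s(y, s)} = T.deleteEdges {s(w, y)} := by
    rw [Sym2.eq_swap, deleteEdges_reattach hT.isTree.isAcyclic hwy hws]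
  have hadj₁ := (reattach_adj_new (T := T) (a := w) hsy).symm
  have hyt₁ := hdel ▸ hyt
  have hshift₂ := shiftsDegree_reattach hT₁.isAcyclic hadj₁ hyt₁
  refine (hT.card_leafSet_le _ (reattach_le (hdel ▸ (deleteEdges_le _).trans hT.le) hst.symm)
    (isTree_reattach hT₁ hadj₁ hyt₁)).not_gt ?_
  exact (hshift₂.card_leafSet_le ((hshift₁.degree_of_ne htw hst.ne').trans ht)).trans_lt
    (hshift₁.card_leafSet_lt hs hw)

lemma not_adj_of_adj_of_degree_eq_two (hT : IsMinLeafSpanningTree G T) (hb : ∃ b, 3 ≤ T.degree b)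
    (hx : T.degree x = 2) (hxu : T.Adj x u) (hxv : T.Adj x v) (huv : u ≠ v)
    (hs : T.degree s = 1) (ht : T.degree t = 1) (hst : s ≠ t)
    (hxs : G.Adj x s) (hxt : G.Adj x t) : ¬ G.Adj u v := by
  intro hG
  have hxv' : (T.deleteEdges {s(x, u)}).Reachable x v :=
    Adj.reachable (deleteEdges_adj.2 ⟨hxv, by grind⟩)
  have htree₁ := isTree_reattach hT.isTree hxu hxv'
  have hshift₁ := shiftsDegree_reattach hT.isTree.isAcyclic hxu hxv'
  have hvx : (reattach T x u v).Adj v x := reattach_adj_of_ne hxv.symm (by grind [hxv.ne])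
  have hvs := reachable_deleteEdges_of_degree_eq_one htree₁.connected
    (by have := hshift₁.degree_source hxv.ne; omega) hvx hxs.ne'
  have hshift := hshift₁.trans (shiftsDegree_reattach htree₁.isAcyclic hvx hvs)
  have hT₂ : IsMinLeafSpanningTree G (reattach (reattach T x u v) v x s) :=
    hT.of_card_leafSet_le
      (reattach_le ((deleteEdges_le _).trans
        (reattach_le ((deleteEdges_le _).trans hT.le) hG.symm)) hxs.symm)
      (isTree_reattach htree₁ hvx hvs) (hshift.card_leafSet_le hs)
  have hdx := hshift.degree_source hxs.ne
  refine hT₂.not_adj_of_degree_eq_one ?_ (s := x) (t := t) (by omega) ?_ hxt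
  · obtain ⟨b, hb⟩ := hb
    refine ⟨b, ?_⟩
    rwa [hshift.degree_of_ne (by rintro rfl; omega) (by rintro rfl; omega)]
  · rwa [hshift.degree_of_ne hxt.ne' hst.symm]

lemma exists_rstemCard_lt (hT : IsMinLeafSpanningTree G T) (hxy : T.Adj x y)
    (hx : ¬ OffStem T x) (hy : ¬ OffStem T y) (hs : T.degree s = 1) (hxs : G.Adj x s)
    (hys : G.Adj y s) : ∃ T', IsMinLeafSpanningTree G T' ∧ rstemCard T < rstemCard T' := by
  obtain ⟨s', hs', -⟩ := degree_eq_one_iff_existsUnique_adj.1 hs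
  obtain ⟨htree, hshift⟩ :=
    isTree_insertLeaf_and_shiftsDegree hT.isTree hs hs'.symm hxy hxs.ne hys.ne
  have hle : insertLeaf T s' s x y ≤ G := insertLeaf_le hT.le hxs hys
  have hd : T.degree s' < 3 := by
    by_contra! hd
    exact (hT.card_leafSet_le _ hle htree).not_gt (hshift.card_leafSet_lt hs hd)
  have hoff : ∀ v, OffStem (insertLeaf T s' s x y) v → OffStem T v ∧ v ≠ s := fun v =>
    offStem_of_offStem_insertLeaf hshift hs hs'.symm hd hx hy
  exact ⟨_, hT.of_card_leafSet_le hle htree (hshift.card_leafSet_le hs),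
    rstemCard_lt_rstemCard (fun v hv => (hoff v hv).1) (.leaf s hs) fun h => (hoff s h).2 rfl⟩

lemma not_adj_of_not_offStem (hT : IsMinLeafSpanningTree G T)
    (hmax : ∀ T' : SimpleGraph V, T' ≤ G → T'.IsTree →
      (leafSet T').card = (leafSet T).card → rstemCard T' ≤ rstemCard T)
    (hxy : T.Adj x y) (hx : ¬ OffStem T x) (hy : ¬ OffStem T y) (hs : T.degree s = 1)
    (hxs : G.Adj x s) : ¬ G.Adj s y := fun hsy => by
  obtain ⟨T', hT', hlt⟩ := hT.exists_rstemCard_lt hxy hx hy hs hxs hsy.symm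
  have hcard : (leafSet T').card = (leafSet T).card :=
    (hT'.card_leafSet_le T hT.le hT.isTree).antisymm (hT.card_leafSet_le T' hT'.le hT'.isTree)
  exact hlt.not_ge (hmax T' hT'.le hT'.isTree hcard)

end IsMinLeafSpanningTree

/-- Let `T` be a spanning tree of the connected `K_{1,4}`-free graph `G`
chosen so that (C1) `|L(T)|` is minimum and (C2) `|V(R_Stem(T))|` is maximum subject to
(C1), with `B(T) ≠ ∅`. Let `b, r` be branch vertices such that `P_T[b,r]` contains no
branch vertex other than `b` and `r`, and let `x` be an internal vertex of `P_T[b,r]`.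
Then `x` has at most one neighbor in `G` belonging to `L(T)`. -/
theorem stmt12 {V : Type*} [Fintype V] (G T : SimpleGraph V) (hG : G.Connected)
    (hK : K14Free G) (hT : T ≤ G) (hTree : T.IsTree)
    (hC1 : ∀ T' : SimpleGraph V, T' ≤ G → T'.IsTree →
      (leafSet T).card ≤ (leafSet T').card)
    (hC2 : ∀ T' : SimpleGraph V, T' ≤ G → T'.IsTree →
      (leafSet T').card = (leafSet T).card → rstemCard T' ≤ rstemCard T)
    (hB : (branchSet T).Nonempty)
    (b r : V) (hb : b ∈ branchSet T) (hr : r ∈ branchSet T) (hbr : b ≠ r)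
    (p : T.Walk b r) (hp : p.IsPath)
    (hint : ∀ v ∈ p.support, 3 ≤ T.degree v → v = b ∨ v = r)
    (x : V) (hx : x ∈ p.support) (hxb : x ≠ b) (hxr : x ≠ r) :
    ((leafSet T).filter fun s => G.Adj x s).card ≤ 1 := by
  have hmin : IsMinLeafSpanningTree G T := ⟨hT, hTree, hC1⟩
  have hb3 : 3 ≤ T.degree b := by simpa [branchSet] using hb
  have hr3 : 3 ≤ T.degree r := by simpa [branchSet] using hr
  have hstem : ∀ {v}, v ∈ p.support → ¬ OffStem T v := not_offStem_of_mem_support hp hb3 hr3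
  have hx2 : T.degree x = 2 := by
    have := two_le_degree_of_mem_support_s12 hp hx hxb hxr
    grind
  obtain ⟨u, v, huv, hxu, hxv, hu, hv⟩ := exists_adj_adj_mem_support hp hx hxb hxr
  have hleaf : ∀ {s y}, T.degree s = 1 → G.Adj x s → T.Adj x y → y ∈ p.support →
      s ≠ y ∧ ¬ G.Adj s y := fun hs hxs hxy hy =>
    ⟨fun h => hstem hy (h ▸ .leaf _ hs),
      hmin.not_adj_of_not_offStem hC2 hxy (hstem hx) (hstem hy) hs hxs⟩
  by_contra! hcard
  obtain ⟨s, hs, t, ht, hst⟩ := Finset.one_lt_card.1 hcard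
  obtain ⟨hs, hxs⟩ : T.degree s = 1 ∧ G.Adj x s := by simpa [leafSet] using hs
  obtain ⟨ht, hxt⟩ : T.degree t = 1 ∧ G.Adj x t := by simpa [leafSet] using ht
  obtain ⟨hsu, hsu'⟩ := hleaf hs hxs hxu hu
  obtain ⟨hsv, hsv'⟩ := hleaf hs hxs hxv hv
  obtain ⟨htu, htu'⟩ := hleaf ht hxt hxu hu
  obtain ⟨htv, htv'⟩ := hleaf ht hxt hxv hv
  exact hK ⟨x, s, t, u, v, hst, hsu, hsv, htu, htv, huv, hxs, hxt, hT hxu, hT hxv,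
    hmin.not_adj_of_degree_eq_one ⟨b, hb3⟩ hs ht, hsu', hsv', htu', htv',
    hmin.not_adj_of_adj_of_degree_eq_two ⟨b, hb3⟩ hx2 hxu hxv huv hs ht hst hxs hxt⟩
end
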